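/- arXiv:math/0501306 — 6 statements merged into one kernel-verified Lean document; each statement's English description precedes it below -/
import Mathlib

section
/- Let I be a closed interval and let f : I → I be a continuous map. Then there exists n in ℕ ∪ {2^∞} such that the set P(f) of periods of all cycles of f equals the initial segment S(n) of the Sharkovsky ordering. -/
/-- The odd part of a natural number: `n = 2^k * oddPart n` with `oddPart n` odd (for `n ≠ 0`). -/
def oddPart (n : ℕ) : ℕ := n / 2 ^ (n.factorization 2)

/-- The Sharkovsky ordering `a <ₛ b`: powers of 2 in increasing order come first,
then for each dyadic level (in decreasing order of the power of 2) the numbers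
`2^k * odd` in decreasing order of the odd part, the odd numbers `> 1` being the largest. -/
def SharkLt (a b : ℕ) : Prop :=
  (oddPart a = 1 ∧ oddPart b = 1 ∧ a < b) ∨
  (oddPart a = 1 ∧ oddPart b ≠ 1) ∨
  (oddPart a ≠ 1 ∧ oddPart b ≠ 1 ∧
    (b.factorization 2 < a.factorization 2 ∨
      (a.factorization 2 = b.factorization 2 ∧ oddPart b < oddPart a)))

/-- The initial segment `S(n) = {m : m <ₛ n} ∪ {n}` of the Sharkovsky ordering. -/
def sharkSegment (n : ℕ) : Set ℕ := {m | SharkLt m n ∨ m = n}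

/-- The set of (minimal) periods of all cycles of `f` lying in `I`. -/
def periodsOn (f : ℝ → ℝ) (I : Set ℝ) : Set ℕ :=
  {n | 0 < n ∧ ∃ x ∈ I, Function.minimalPeriod f x = n}

/-!
Du's proof of Sharkovsky's theorem. A cycle of length at least two has neighbouring points `p < q`
that `f` sends to opposite sides of the gap `J = [p, q]`, so `J` covers itself; this gives a fixed
point, and comparing `f` with `f²` to the left of a preimage of `q` gives a point of period two.

If the length `m` of the cycle is odd, the cycle cannot alternate between the two sides of `J`, so
some interval `K` that meets `J` in at most an endpoint covers `J` as well, while `m - 1` iterations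
stretch `J` over `K`. Following the itinerary `K → J → ⋯ → J → K` produces every odd period `n > m`
when `m` is the smallest odd period other than one. For the even periods, `f²` has a horseshoe which
`f` moves off itself: a point of period `n` for `f²` in the horseshoe has period `2n` for `f`.

The remaining relations follow by passing to the iterates `f^(2^i)`, and a nonempty set of positive
integers that is closed downwards in the Sharkovsky order is a segment or the set of powers of two.
-/

open Function Set

section SharkovskyOrder

variable {P : Set ℕ} {n : ℕ}

theorem two_pow_factorization_mul_oddPart (n : ℕ) : 2 ^ n.factorization 2 * oddPart n = n :=
  Nat.ordProj_mul_ordCompl_eq_self n 2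

theorem odd_oddPart (hn : n ≠ 0) : Odd (oddPart n) :=
  Nat.not_even_iff_odd.1 fun h => Nat.not_dvd_ordCompl Nat.prime_two hn h.two_dvd

theorem oddPart_two_pow (k : ℕ) : oddPart (2 ^ k) = 1 := Nat.ordCompl_self_pow Nat.prime_two

theorem eq_two_pow_of_oddPart_eq_one (h : oddPart n = 1) : n = 2 ^ n.factorization 2 := by
  conv_lhs => rw [← two_pow_factorization_mul_oddPart n, h, mul_one]

theorem SharkLt.ne_zero {m : ℕ} (h : SharkLt m n) : m ≠ 0 := by
  rintro rfl
  simp [SharkLt, oddPart] at h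

theorem exists_subset_sharkSegment_of_oddPart_ne_one (hn : n ∈ P) (hodd : oddPart n ≠ 1) :
    ∃ n ∈ P, P ⊆ sharkSegment n := by
  -- `<ₛ` reverses the lexicographic order of `(m.factorization 2, oddPart m)`.
  obtain ⟨n, hn⟩ := exists_minimalFor_of_wellFoundedLT (fun m => m ∈ P ∧ oddPart m ≠ 1)
    (fun m => toLex (m.factorization 2, oddPart m)) ⟨n, hn, hodd⟩
  obtain ⟨⟨hnP, hn1⟩, hmin⟩ := hn
  refine ⟨n, hnP, fun m hm => ?_⟩
  by_cases hm1 : oddPart m = 1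
  · exact Or.inl (Or.inr (Or.inl ⟨hm1, hn1⟩))
  have hlex : n.factorization 2 < m.factorization 2 ∨
      n.factorization 2 = m.factorization 2 ∧ oddPart n ≤ oddPart m :=
    Prod.Lex.toLex_le_toLex.1 ((le_total _ _).elim id (hmin ⟨hm, hm1⟩))
  obtain hlt | ⟨heq, hle⟩ := hlex
  · exact Or.inl (Or.inr (Or.inr ⟨hm1, hn1, Or.inl hlt⟩))
  obtain heq' | hlt := hle.eq_or_lt
  · right
    rw [← two_pow_factorization_mul_oddPart m, ← heq, ← heq', two_pow_factorization_mul_oddPart]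
  · exact Or.inl (Or.inr (Or.inr ⟨hm1, hn1, Or.inr ⟨heq.symm, hlt⟩⟩))

theorem exists_subset_sharkSegment_of_bddAbove (hne : P.Nonempty) (hb : BddAbove P)
    (hodd : ∀ n ∈ P, oddPart n = 1) : ∃ n ∈ P, P ⊆ sharkSegment n := by
  have hsup := Nat.sSup_mem hne hb
  exact ⟨sSup P, hsup, fun m hm => (le_csSup hb hm).lt_or_eq.imp_left fun hlt =>
    Or.inl ⟨hodd m hm, hodd _ hsup, hlt⟩⟩

theorem eq_setOf_two_pow_of_not_bddAbove (hb : ¬BddAbove P) (hodd : ∀ n ∈ P, oddPart n = 1)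
    (hlower : ∀ n ∈ P, ∀ m, SharkLt m n → m ∈ P) : P = {m | ∃ k : ℕ, m = 2 ^ k} := by
  refine Subset.antisymm (fun m hm => ⟨_, eq_two_pow_of_oddPart_eq_one (hodd m hm)⟩) ?_
  rintro _ ⟨k, rfl⟩
  obtain ⟨n, hn, hlt⟩ := not_bddAbove_iff.1 hb (2 ^ k)
  exact hlower n hn _ (Or.inl ⟨oddPart_two_pow k, hodd n hn, hlt⟩)

theorem exists_eq_sharkSegment_or_eq_setOf_two_pow (hne : P.Nonempty)
    (hlower : ∀ n ∈ P, ∀ m, SharkLt m n → m ∈ P) :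
    (∃ n ∈ P, P = sharkSegment n) ∨ P = {m | ∃ k : ℕ, m = 2 ^ k} := by
  have hseg : (∃ n ∈ P, P ⊆ sharkSegment n) → ∃ n ∈ P, P = sharkSegment n := by
    rintro ⟨n, hn, hsub⟩
    exact ⟨n, hn, hsub.antisymm fun m hm => hm.elim (hlower n hn m) fun h => h ▸ hn⟩
  by_cases hodd : ∀ n ∈ P, oddPart n = 1
  · by_cases hb : BddAbove P
    · exact Or.inl (hseg (exists_subset_sharkSegment_of_bddAbove hne hb hodd))
    · exact Or.inr (eq_setOf_two_pow_of_not_bddAbove hb hodd hlower)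
  · push Not at hodd
    obtain ⟨n, hn, hn1⟩ := hodd
    exact Or.inl (hseg (exists_subset_sharkSegment_of_oddPart_ne_one hn hn1))

end SharkovskyOrder

section Periods

theorem three_mul_le_of_dvd_of_odd {d n : ℕ} (hn : Odd n) (hdvd : d ∣ n) (hne : d ≠ n) :
    3 * d ≤ n := by
  obtain ⟨c, rfl⟩ := hdvd
  obtain ⟨k, rfl⟩ : Odd c := Nat.Odd.of_mul_right hn
  have hk : k ≠ 0 := by
    rintro rfl
    simp at hne
  calc 3 * d ≤ (2 * k + 1) * d := Nat.mul_le_mul_right d (by omega)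
    _ = d * (2 * k + 1) := mul_comm _ _

variable {α : Type*} {f : α → α} {x y : α}

theorem gcd_mul_minimalPeriod_iterate {n : ℕ} (hn : n ≠ 0) :
    (minimalPeriod f x).gcd n * minimalPeriod f^[n] x = minimalPeriod f x := by
  rw [minimalPeriod_iterate_eq_div_gcd hn, Nat.mul_div_cancel' (Nat.gcd_dvd_left _ _)]

theorem minimalPeriod_iterate_of_eq_mul {m n : ℕ} (hn : n ≠ 0)
    (h : minimalPeriod f x = n * m) : minimalPeriod f^[n] x = m := by
  rw [minimalPeriod_iterate_eq_div_gcd hn, h, Nat.gcd_mul_right_left,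
    Nat.mul_div_cancel_left m (Nat.pos_of_ne_zero hn)]

theorem mul_minimalPeriod_iterate_of_dvd {n : ℕ} (hn : n ≠ 0) (h : n ∣ minimalPeriod f x) :
    n * minimalPeriod f^[n] x = minimalPeriod f x := by
  simpa only [Nat.gcd_eq_right h] using gcd_mul_minimalPeriod_iterate (f := f) (x := x) hn

theorem exists_minimalPeriod_eq_prime_pow_mul {p : ℕ} (hp : p.Prime) (i : ℕ) :
    ∃ j ≤ i, minimalPeriod f x = p ^ j * minimalPeriod f^[p ^ i] x := by
  obtain ⟨j, hj, hgcd⟩ := (Nat.dvd_prime_pow hp).1 (Nat.gcd_dvd_right (minimalPeriod f x) (p ^ i))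
  exact ⟨j, hj, by rw [← hgcd, gcd_mul_minimalPeriod_iterate (pow_ne_zero i hp.ne_zero)]⟩

theorem minimalPeriod_eq_prime_pow_mul_of_dvd {p i : ℕ} (hp : p.Prime)
    (h : p ∣ minimalPeriod f^[p ^ i] x) :
    minimalPeriod f x = p ^ i * minimalPeriod f^[p ^ i] x := by
  have hgcd_mul := gcd_mul_minimalPeriod_iterate (f := f) (x := x) (pow_ne_zero i hp.ne_zero)
  obtain ⟨j, hj, hgcd⟩ := (Nat.dvd_prime_pow hp).1 (Nat.gcd_dvd_right (minimalPeriod f x) (p ^ i))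
  obtain rfl | hji := hj.eq_or_lt
  · rw [hgcd] at hgcd_mul
    exact hgcd_mul.symm
  have hdvd : p ^ (j + 1) ∣ (minimalPeriod f x).gcd (p ^ i) := by
    refine Nat.dvd_gcd ?_ (pow_dvd_pow p hji)
    rw [← hgcd_mul, hgcd, pow_succ]
    exact mul_dvd_mul_left _ h
  rw [hgcd, Nat.pow_dvd_pow_iff_le_right hp.one_lt] at hdvd
  omega

theorem even_minimalPeriod_of_forall_notMem {s : Set α} (hs : ∀ i, (f^[2])^[i] x ∈ s)
    (hf : ∀ y ∈ s, f y ∉ s) : Even (minimalPeriod f x) := by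
  by_contra hodd
  obtain ⟨k, hk⟩ := Nat.not_even_iff_odd.1 hodd
  have hx : f ((f^[2])^[k] x) = x := by
    rw [← iterate_mul, ← iterate_succ_apply' f, ← Nat.add_one, ← hk, iterate_minimalPeriod]
  exact hf _ (hs k) (hx.symm ▸ hs 0)

/-- The forward orbit of `x` under `f`, as a set. For a periodic point `x` this is the cycle
of `x`; a set is more convenient here than the `Cycle` given by `Function.periodicOrbit`. -/
def forwardOrbit (f : α → α) (x : α) : Set α := range fun n => f^[n] x

theorem self_mem_forwardOrbit (f : α → α) (x : α) : x ∈ forwardOrbit f x := ⟨0, rfl⟩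

theorem mapsTo_forwardOrbit (f : α → α) (x : α) :
    MapsTo f (forwardOrbit f x) (forwardOrbit f x) := by
  rintro _ ⟨n, rfl⟩
  exact ⟨n + 1, iterate_succ_apply' f n x⟩

theorem finite_forwardOrbit (hx : x ∈ periodicPts f) : (forwardOrbit f x).Finite := by
  refine ((finite_Iio (minimalPeriod f x)).image fun n => f^[n] x).subset ?_
  rintro _ ⟨n, rfl⟩
  exact ⟨n % minimalPeriod f x, Nat.mod_lt n (minimalPeriod_pos_of_mem_periodicPts hx),
    iterate_mod_minimalPeriod_eq⟩

theorem minimalPeriod_eq_of_mem_forwardOrbit (hx : x ∈ periodicPts f)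
    (hy : y ∈ forwardOrbit f x) : minimalPeriod f y = minimalPeriod f x := by
  obtain ⟨n, rfl⟩ := hy
  exact minimalPeriod_apply_iterate hx n

theorem forwardOrbit_eq_of_mem (hx : x ∈ periodicPts f) (hy : y ∈ forwardOrbit f x) :
    forwardOrbit f y = forwardOrbit f x := by
  obtain ⟨n, rfl⟩ := hy
  have hn : f^[n] x ∈ periodicPts f :=
    minimalPeriod_pos_iff_mem_periodicPts.1
      ((minimalPeriod_apply_iterate hx n).symm ▸ minimalPeriod_pos_of_mem_periodicPts hx)
  ext z
  simp only [forwardOrbit, mem_range, ← mem_periodicOrbit_iff hx, ← mem_periodicOrbit_iff hn,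
    periodicOrbit_apply_iterate_eq hx]

theorem forwardOrbit_subset_of_mapsTo {s : Set α} (hs : MapsTo f s s) (hx : x ∈ s) :
    forwardOrbit f x ⊆ s := by
  rintro _ ⟨n, rfl⟩
  exact hs.iterate n hx

theorem forwardOrbit_subset_forwardOrbit_iterate_two (hodd : Odd (minimalPeriod f x)) :
    forwardOrbit f x ⊆ forwardOrbit f^[2] x := by
  have heven : ∀ n, Even n → f^[n] x ∈ forwardOrbit f^[2] x := by
    intro n hn
    obtain ⟨k, rfl⟩ := hn.two_dvd
    exact ⟨k, congrFun (iterate_mul f 2 k).symm x⟩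
  rintro _ ⟨n, rfl⟩
  obtain hn | hn := Nat.even_or_odd n
  · exact heven n hn
  · simpa only [iterate_add_minimalPeriod_eq] using heven _ (hn.add_odd hodd)

end Periods

section TurningGap

variable {α : Type*} [LinearOrder α] {f : α → α} {s : Set α} {p q x y : α}

/-- A turning gap of `f` on `s`: points `p < q` of `s` without points of `s` strictly between
them, such that `f` sends each of the two to the other side of the gap. -/
structure IsTurningGap (f : α → α) (s : Set α) (p q : α) : Prop where
  left_mem : p ∈ s
  right_mem : q ∈ s
  lt : p < q
  right_le_map : q ≤ f p
  map_le_left : f q ≤ p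
  le_or_le : ∀ y ∈ s, y ≤ p ∨ q ≤ y

theorem exists_isTurningGap (hs : s.Finite) (hne : s.Nonempty) (hmaps : MapsTo f s s)
    (hfix : ∀ y ∈ s, f y ≠ y) : ∃ p q, IsTurningGap f s p q := by
  obtain ⟨m, hm, hmin⟩ := exists_min_image s id hs hne
  -- `p` is the largest point that `f` moves to the right, and `q` its successor in `s`.
  obtain ⟨p, ⟨hp, hpf⟩, hpmax⟩ := exists_max_image {y ∈ s | y < f y} id (hs.sep _)
    ⟨m, hm, (hmin _ (hmaps hm)).lt_of_ne (hfix m hm).symm⟩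
  obtain ⟨q, ⟨hq, hpq⟩, hqmin⟩ := exists_min_image {y ∈ s | p < y} id (hs.sep _)
    ⟨f p, hmaps hp, hpf⟩
  have le_or_le : ∀ y ∈ s, y ≤ p ∨ q ≤ y := fun y hy =>
    (le_or_gt y p).imp_right fun hpy => hqmin y ⟨hy, hpy⟩
  have hfq : f q < q := (hfix q hq).lt_of_le (not_lt.1 fun h => hpq.not_ge (hpmax q ⟨hq, h⟩))
  exact ⟨p, q, hp, hq, hpq, hqmin _ ⟨hmaps hp, hpf⟩,
    (le_or_le _ (hmaps hq)).resolve_right hfq.not_ge, le_or_le⟩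

theorem exists_isTurningGap_forwardOrbit (hx : 2 ≤ minimalPeriod f x) :
    ∃ p q, minimalPeriod f p = minimalPeriod f x ∧ IsTurningGap f (forwardOrbit f p) p q := by
  have hper : x ∈ periodicPts f := minimalPeriod_pos_iff_mem_periodicPts.1 (by omega)
  have hfix : ∀ y ∈ forwardOrbit f x, f y ≠ y := fun y hy hfy => by
    have := minimalPeriod_eq_of_mem_forwardOrbit hper hy
    rw [minimalPeriod_eq_one_iff_isFixedPt.2 hfy] at this
    omega
  obtain ⟨p, q, hgap⟩ := exists_isTurningGap (finite_forwardOrbit hper)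
    ⟨x, self_mem_forwardOrbit f x⟩ (mapsTo_forwardOrbit f x) hfix
  refine ⟨p, q, minimalPeriod_eq_of_mem_forwardOrbit hper hgap.left_mem, ?_⟩
  rwa [forwardOrbit_eq_of_mem hper hgap.left_mem]

namespace IsTurningGap

theorem exists_same_side (h : IsTurningGap f (forwardOrbit f p) p q)
    (hodd : Odd (minimalPeriod f p)) :
    ∃ y ∈ forwardOrbit f p, y ≤ p ∧ f y ≤ p ∨ q ≤ y ∧ q ≤ f y := by
  by_contra! hswitch
  have hleft : ∀ y ∈ forwardOrbit f p ∩ Iic p, q ≤ f y := fun y ⟨hy, hyp⟩ =>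
    (h.le_or_le _ (mapsTo_forwardOrbit f p hy)).resolve_left (((hswitch y hy).1 hyp).not_ge)
  have hmaps : MapsTo f^[2] (forwardOrbit f p ∩ Iic p) (forwardOrbit f p ∩ Iic p) := by
    intro y hy
    have hfy := mapsTo_forwardOrbit f p hy.1
    have hffy := mapsTo_forwardOrbit f p hfy
    exact ⟨hffy, (h.le_or_le _ hffy).resolve_right ((hswitch _ hfy).2 (hleft y hy)).not_ge⟩
  refine Nat.not_even_iff_odd.2 hodd (even_minimalPeriod_of_forall_notMem
    (fun i => hmaps.iterate i ⟨self_mem_forwardOrbit f p, le_rfl⟩) fun y hy hfy => ?_)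
  exact (h.lt.trans_le (hleft y hy)).not_ge hfy.2

theorem minimalPeriod_eq_two (h : IsTurningGap f s p q) (hy : y = p ∨ y = q)
    (hy₁ : f y ∈ Icc p q) (hy₂ : f (f y) ∈ Icc p q) : minimalPeriod f y = 2 := by
  refine minimalPeriod_eq_prime (show f (f y) = y from ?_) (fun hfix : f y = y => ?_)
  · obtain rfl | rfl := hy
    · rw [le_antisymm hy₁.2 h.right_le_map] at hy₂ ⊢
      exact le_antisymm h.map_le_left hy₂.1
    · rw [le_antisymm h.map_le_left hy₁.1] at hy₂ ⊢
      exact le_antisymm hy₂.2 h.right_le_map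
  · grind [h.lt, h.right_le_map, h.map_le_left]

end IsTurningGap

end TurningGap

section Horseshoe

variable {α : Type*} [PartialOrder α] {g : α → α} {d e t y : α} {n : ℕ}

/-- A one-sided horseshoe of `g`: points `d < t < e` with `g d = g e = e` and `g t ≤ d`,
so that both `[d, t]` and `[t, e]` are stretched over `[d, e]`. -/
structure IsHorseshoe (g : α → α) (d t e : α) : Prop where
  left_lt : d < t
  lt_right : t < e
  map_left : g d = e
  map_right : g e = e
  map_mid_le : g t ≤ d

theorem IsHorseshoe.iterate_mem_Ioo (h : IsHorseshoe g d t e) (hy : y ∈ Icc d t)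
    (hmem : ∀ i, 0 < i → i < n → g^[i] y ∈ Icc t e) (hper : IsPeriodicPt g n y) (hn : n ≠ 0)
    (i : ℕ) : g^[i] y ∈ Ioo d e := by
  have hIcc : g^[i] y ∈ Icc d e := by
    rw [← hper.iterate_mod_apply]
    obtain h0 | hpos := (i % n).eq_zero_or_pos
    · rw [h0]
      exact ⟨hy.1, hy.2.trans h.lt_right.le⟩
    · exact Icc_subset_Icc_left h.left_lt.le
        (hmem _ hpos (Nat.mod_lt i (Nat.pos_of_ne_zero hn)))
  have hne : ∀ j, g^[j] y ≠ e := by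
    intro j hj
    have hreturn : g^[n * j - j] e = y := by
      rw [← hj, ← iterate_add_apply,
        Nat.sub_add_cancel (Nat.le_mul_of_pos_left j (Nat.pos_of_ne_zero hn))]
      exact hper.mul_const j
    rw [iterate_fixed h.map_right] at hreturn
    exact (hreturn.trans_le hy.2).not_gt h.lt_right
  refine ⟨hIcc.1.lt_of_ne' fun hd => hne (i + 1) ?_, hIcc.2.lt_of_ne (hne i)⟩
  rw [iterate_succ_apply', hd, h.map_left]

end Horseshoe

section Covering

theorem exists_isFixedPt_of_surjOn {α : Type*} [LinearOrder α] [TopologicalSpace α]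
    [OrderClosedTopology α] {f : α → α} {s : Set α} {a b : α} (hab : a ≤ b)
    (hs : IsPreconnected s) (hf : ContinuousOn f s) (hsub : s ⊆ Icc a b)
    (hsurj : SurjOn f s (Icc a b)) : ∃ x ∈ s, IsFixedPt f x := by
  obtain ⟨u, hu, rfl⟩ := hsurj (left_mem_Icc.2 hab)
  obtain ⟨v, hv, rfl⟩ := hsurj (right_mem_Icc.2 hab)
  exact hs.intermediate_value₂ hu hv hf continuousOn_id (hsub hu).1 (hsub hv).2

variable {α β : Type*} [ConditionallyCompleteLinearOrder α] [TopologicalSpace α] [OrderTopology α]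
  [DenselyOrdered α] [LinearOrder β] [TopologicalSpace β] [OrderClosedTopology β]

theorem exists_last_eq {f g : α → β} {a b : α} (hab : a ≤ b) (hf : ContinuousOn f (Icc a b))
    (hg : ContinuousOn g (Icc a b)) (ha : f a ≤ g a) (hb : g b ≤ f b) :
    ∃ x ∈ Icc a b, f x = g x ∧ ∀ y ∈ Ioc x b, g y < f y := by
  have hclosed : IsClosed {x ∈ Icc a b | f x ≤ g x} := isClosed_Icc.isClosed_le hf hg
  obtain ⟨x, ⟨hx, hfg⟩, hmax⟩ := (isCompact_Icc.of_isClosed_subset hclosed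
    (sep_subset _ _)).exists_isGreatest ⟨a, left_mem_Icc.2 hab, ha⟩
  have hlt : ∀ y ∈ Ioc x b, g y < f y := fun y hy => not_le.1 fun h =>
    hy.1.not_ge (hmax ⟨⟨hx.1.trans hy.1.le, hy.2⟩, h⟩)
  have hsub : Icc x b ⊆ Icc a b := Icc_subset_Icc_left hx.1
  obtain ⟨y, hy, heq⟩ := isPreconnected_Icc.intermediate_value₂ (left_mem_Icc.2 hx.2)
    (right_mem_Icc.2 hx.2) (hf.mono hsub) (hg.mono hsub) hfg hb
  obtain rfl | hxy := hy.1.eq_or_lt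
  · exact ⟨x, hx, heq, hlt⟩
  · exact absurd heq (hlt y ⟨hxy, hy.2⟩).ne'

theorem exists_first_eq {f g : α → β} {a b : α} (hab : a ≤ b) (hf : ContinuousOn f (Icc a b))
    (hg : ContinuousOn g (Icc a b)) (ha : f a ≤ g a) (hb : g b ≤ f b) :
    ∃ x ∈ Icc a b, f x = g x ∧ ∀ y ∈ Ico a x, f y < g y := by
  have hdual := exists_last_eq (α := αᵒᵈ) (f := g ∘ OrderDual.ofDual) (g := f ∘ OrderDual.ofDual)
    (a := OrderDual.toDual b) (b := OrderDual.toDual a) hab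
  simp only [Icc_toDual] at hdual
  obtain ⟨x, hx, heq, hlt⟩ := hdual hg hf hb ha
  exact ⟨x, hx, heq.symm, fun y hy => hlt y ⟨hy.2, hy.1⟩⟩

theorem exists_Icc_image_eq_of_le {f : α → β} {a b : α} (hab : a ≤ b)
    (hf : ContinuousOn f (Icc a b)) (hle : f a ≤ f b) :
    ∃ a' b', a' ≤ b' ∧ Icc a' b' ⊆ Icc a b ∧ f '' Icc a' b' = Icc (f a) (f b) := by
  obtain ⟨x, hx, hfx, hgt⟩ := exists_last_eq hab hf continuousOn_const le_rfl hle
  have hsub : Icc x b ⊆ Icc a b := Icc_subset_Icc_left hx.1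
  obtain ⟨y, hy, hfy, hlt⟩ := exists_first_eq hx.2 (hf.mono hsub) continuousOn_const
    (hfx.trans_le hle) le_rfl
  have hsub' : Icc x y ⊆ Icc x b := Icc_subset_Icc_right hy.2
  refine ⟨x, y, hy.1, hsub'.trans hsub, Subset.antisymm ?_ ?_⟩
  · rintro _ ⟨t, ht, rfl⟩
    constructor
    · obtain rfl | hxt := ht.1.eq_or_lt
      exacts [hfx.ge, (hgt t ⟨hxt, ht.2.trans hy.2⟩).le]
    · obtain rfl | hty := ht.2.eq_or_lt
      exacts [hfy.le, (hlt t ⟨ht.1, hty⟩).le]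
  · simpa only [hfx, hfy] using intermediate_value_Icc hy.1 (hf.mono (hsub'.trans hsub))

theorem exists_Icc_image_eq_of_surjOn {f : α → β} {a b : α} {c d : β} (hcd : c ≤ d)
    (hf : ContinuousOn f (Icc a b)) (hsurj : SurjOn f (Icc a b) (Icc c d)) :
    ∃ a' b', a' ≤ b' ∧ Icc a' b' ⊆ Icc a b ∧ f '' Icc a' b' = Icc c d := by
  obtain ⟨u, hu, rfl⟩ := hsurj (left_mem_Icc.2 hcd)
  obtain ⟨v, hv, rfl⟩ := hsurj (right_mem_Icc.2 hcd)
  obtain huv | hvu := le_total u v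
  · have hsub : Icc u v ⊆ Icc a b := Icc_subset_Icc hu.1 hv.2
    obtain ⟨a', b', hab, hsub', himage⟩ := exists_Icc_image_eq_of_le huv (hf.mono hsub) hcd
    exact ⟨a', b', hab, hsub'.trans hsub, himage⟩
  · have hsub : Icc v u ⊆ Icc a b := Icc_subset_Icc hv.1 hu.2
    obtain ⟨a', b', hab, hsub', himage⟩ :=
      exists_Icc_image_eq_of_le (β := βᵒᵈ) (f := OrderDual.toDual ∘ f) hvu (hf.mono hsub) hcd
    exact ⟨a', b', hab, hsub'.trans hsub, himage.trans Icc_toDual⟩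

variable {f : α → α} {k l p q : α} {r : ℕ}

theorem exists_Icc_forall_mapsTo_iterate (hf : Continuous f) (hkl : k ≤ l)
    (hJJ : SurjOn f (Icc p q) (Icc p q)) (hJK : SurjOn f^[r] (Icc p q) (Icc k l)) (n : ℕ) :
    ∃ a b, a ≤ b ∧ (∀ i ≤ n, MapsTo f^[i] (Icc a b) (Icc p q)) ∧
      f^[n + r] '' Icc a b = Icc k l := by
  induction n with
  | zero =>
    obtain ⟨a, b, hab, hsub, himage⟩ :=
      exists_Icc_image_eq_of_surjOn hkl (hf.iterate r).continuousOn hJK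
    refine ⟨a, b, hab, fun i hi => ?_, by rwa [Nat.zero_add]⟩
    rwa [Nat.le_zero.1 hi]
  | succ n ih =>
    obtain ⟨a, b, hab, hmaps, himage⟩ := ih
    obtain ⟨a', b', hab', hsub, himage'⟩ := exists_Icc_image_eq_of_surjOn hab hf.continuousOn
      (hJJ.mono Subset.rfl (hmaps 0 n.zero_le))
    refine ⟨a', b', hab', fun i hi => ?_, ?_⟩
    · cases i with
      | zero => exact hsub
      | succ i => exact (hmaps i (Nat.le_of_succ_le_succ hi)).comp (himage' ▸ mapsTo_image f _)
    · rw [Nat.add_right_comm, iterate_succ, image_comp, himage', himage]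

/- Pulling `Icc k l` back along the itinerary `Icc k l → Icc p q → ⋯ → Icc p q → Icc k l` gives a
subinterval of `Icc k l` that the iterate stretches over `Icc k l`. -/
theorem exists_isPeriodicPt_of_surjOn (hf : Continuous f) (hkl : k ≤ l)
    (hKJ : SurjOn f (Icc k l) (Icc p q)) (hJJ : SurjOn f (Icc p q) (Icc p q))
    (hJK : SurjOn f^[r] (Icc p q) (Icc k l)) (n : ℕ) :
    ∃ x ∈ Icc k l, (∀ i ≤ n, f^[i + 1] x ∈ Icc p q) ∧ IsPeriodicPt f (n + r + 1) x := by
  obtain ⟨a, b, hab, hmaps, himage⟩ := exists_Icc_forall_mapsTo_iterate hf hkl hJJ hJK n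
  obtain ⟨a', b', -, hsub, himage'⟩ := exists_Icc_image_eq_of_surjOn hab hf.continuousOn
    (hKJ.mono Subset.rfl (hmaps 0 n.zero_le))
  have hsurj : SurjOn f^[n + r + 1] (Icc a' b') (Icc k l) := by
    rw [SurjOn, iterate_succ, image_comp, himage', himage]
  obtain ⟨x, hx, hfix⟩ := exists_isFixedPt_of_surjOn hkl isPreconnected_Icc
    (hf.iterate _).continuousOn hsub hsurj
  exact ⟨x, hsub hx, fun i hi => hmaps i hi (himage' ▸ mem_image_of_mem f hx), hfix⟩

end Covering

section LinearContinuum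

variable {α : Type*} [ConditionallyCompleteLinearOrder α] [TopologicalSpace α] [OrderTopology α]
  [DenselyOrdered α] {f : α → α} {a d e p q t v x y : α} {m n : ℕ}

theorem IsTurningGap.surjOn {s : Set α} (h : IsTurningGap f s p q) (hf : Continuous f) :
    SurjOn f (Icc p q) (Icc p q) :=
  (Icc_subset_Icc h.map_le_left h.right_le_map).trans
    (intermediate_value_Icc' h.lt.le hf.continuousOn)

theorem exists_isFixedPt_of_minimalPeriod_ne_zero (hf : Continuous f)
    (hx : minimalPeriod f x ≠ 0) : ∃ y, IsFixedPt f y := by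
  obtain hfix | hnfix := eq_or_ne (minimalPeriod f x) 1
  · exact ⟨x, minimalPeriod_eq_one_iff_isFixedPt.1 hfix⟩
  · obtain ⟨p, q, -, hgap⟩ := exists_isTurningGap_forwardOrbit (f := f) (x := x) (by omega)
    obtain ⟨y, -, hy⟩ := exists_isFixedPt_of_surjOn hgap.lt.le isPreconnected_Icc
      hf.continuousOn Subset.rfl (hgap.surjOn hf)
    exact ⟨y, hy⟩

theorem exists_le_forall_mem_Icc_lt_map (hf : Continuous f) (hav : a ≤ v) (hv : v < f v)
    (ha : a ≤ f (f a)) : ∃ w ≤ v, w ≤ f (f w) ∧ ∀ y ∈ Icc w v, y < f y := by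
  by_cases hlt : ∀ y ∈ Icc a v, y < f y
  · exact ⟨a, hav, ha, hlt⟩
  push Not at hlt
  obtain ⟨s, hs, hfs⟩ := hlt
  obtain ⟨z, hz, hfz, hgt⟩ := exists_last_eq hs.2 hf.continuousOn continuousOn_id hfs hv.le
  rw [id_eq] at hfz
  obtain ⟨w, hw, hfw⟩ := intermediate_value_Icc hz.2 hf.continuousOn ⟨hfz.trans_le hz.2, hv.le⟩
  have hzw : z < w := hw.1.lt_of_ne <| by
    rintro rfl
    exact hv.ne' (by rw [← hfw, hfz, hfz])
  exact ⟨w, hw.2, hfw.symm ▸ hw.2.trans hv.le, fun y hy => hgt y ⟨hzw.trans_le hy.1, hy.2⟩⟩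

theorem exists_minimalPeriod_eq_two (hf : Continuous f) (hx : 2 ≤ minimalPeriod f x) :
    ∃ y, minimalPeriod f y = 2 := by
  obtain ⟨p, q, hp, hgap⟩ := exists_isTurningGap_forwardOrbit hx
  obtain ⟨v, hv, hfv⟩ := intermediate_value_Icc' hgap.lt.le hf.continuousOn
    ⟨hgap.map_le_left.trans hgap.lt.le, hgap.right_le_map⟩
  have hvq : v ≠ q := by
    rintro rfl
    exact (hfv.symm.trans_le hgap.map_le_left).not_gt hgap.lt
  obtain ⟨a, ha, hmin⟩ := exists_min_image (forwardOrbit f p) id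
    (finite_forwardOrbit (minimalPeriod_pos_iff_mem_periodicPts.1 (by omega))) ⟨p, hgap.left_mem⟩
  have hmaps := mapsTo_forwardOrbit f p
  obtain ⟨w, hwv, hw, hlt⟩ := exists_le_forall_mem_Icc_lt_map hf
    ((hmin p hgap.left_mem).trans hv.1) (hfv.symm ▸ hv.2.lt_of_ne hvq) (hmin _ (hmaps (hmaps ha)))
  obtain ⟨y, hy, hfy⟩ := isPreconnected_Icc.intermediate_value₂ (left_mem_Icc.2 hwv)
    (right_mem_Icc.2 hwv) continuousOn_id (hf.comp hf).continuousOn hw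
    (show f (f v) ≤ v from hfv.symm ▸ hgap.map_le_left.trans hv.1)
  exact ⟨y, minimalPeriod_eq_prime hfy.symm (hlt y hy).ne'⟩

theorem surjOn_iterate_Icc_of_mem_forwardOrbit {k l : α} (hf : Continuous f) (hpq : p ≤ q)
    (hJJ : SurjOn f (Icc p q) (Icc p q)) (hp : p ∈ periodicPts f) (hk : k ∈ forwardOrbit f p)
    (hl : l ∈ forwardOrbit f p) :
    SurjOn f^[minimalPeriod f p - 1] (Icc p q) (Icc k l) := by
  have hmono : Monotone fun n => f^[n] '' Icc p q := monotone_nat_of_le_succ fun n => by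
    rw [iterate_succ, image_comp]
    exact image_mono hJJ
  have horbit : forwardOrbit f p ⊆ f^[minimalPeriod f p - 1] '' Icc p q := by
    rintro _ ⟨n, rfl⟩
    have hlt : n % minimalPeriod f p < minimalPeriod f p :=
      Nat.mod_lt n (minimalPeriod_pos_of_mem_periodicPts hp)
    simp only [← iterate_mod_minimalPeriod_eq (n := n)]
    exact hmono (Nat.le_sub_one_of_lt hlt) (mem_image_of_mem _ (left_mem_Icc.2 hpq))
  exact (isPreconnected_Icc.image _ (hf.iterate _).continuousOn).ordConnected.out
    (horbit hk) (horbit hl)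

theorem IsTurningGap.exists_Icc_surjOn (h : IsTurningGap f (forwardOrbit f p) p q)
    (hf : Continuous f) (hodd : Odd (minimalPeriod f p)) :
    ∃ k ∈ forwardOrbit f p, ∃ l ∈ forwardOrbit f p, k ≤ l ∧ SurjOn f (Icc k l) (Icc p q) ∧
      ∀ y ∈ Icc k l ∩ Icc p q, y = p ∨ y = q := by
  obtain ⟨y, hy, ⟨hyp, hfy⟩ | ⟨hqy, hfy⟩⟩ := h.exists_same_side hodd
  · refine ⟨y, hy, p, h.left_mem, hyp, ?_, fun w hw => Or.inl (le_antisymm hw.1.2 hw.2.1)⟩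
    exact (Icc_subset_Icc hfy h.right_le_map).trans (intermediate_value_Icc hyp hf.continuousOn)
  · refine ⟨q, h.right_mem, y, hy, hqy, ?_, fun w hw => Or.inr (le_antisymm hw.2.2 hw.1.1)⟩
    exact (Icc_subset_Icc h.map_le_left hfy).trans (intermediate_value_Icc hqy hf.continuousOn)

/- A periodic orbit of length `n` that starts in `Icc k l` and then stays in `Icc p q` for the first
`n - m + 1` steps cannot close up early, because a proper divisor `d` of the odd number `n` that is
`1` or at least `m` satisfies `d ≤ n - m + 1`. -/
theorem exists_minimalPeriod_eq_of_odd_of_forall_le (hf : Continuous f)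
    (hodd : Odd (minimalPeriod f x)) (hx : minimalPeriod f x ≠ 1)
    (hmin : ∀ y, Odd (minimalPeriod f y) → minimalPeriod f y ≠ 1 →
      minimalPeriod f x ≤ minimalPeriod f y)
    (hn : Odd n) (hlt : minimalPeriod f x < n) : ∃ y, minimalPeriod f y = n := by
  obtain ⟨p, q, hp, hgap⟩ := exists_isTurningGap_forwardOrbit (f := f) (x := x)
    (by have := hodd.pos; omega)
  rw [← hp] at hodd hx hmin hlt
  obtain ⟨k, hk, l, hl, hkl, hKJ, hends⟩ := hgap.exists_Icc_surjOn hf hodd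
  have hJJ := hgap.surjOn hf
  obtain ⟨y, hyK, hyJ, hper⟩ := exists_isPeriodicPt_of_surjOn hf hkl hKJ hJJ
    (surjOn_iterate_Icc_of_mem_forwardOrbit hf hgap.lt.le hJJ
      (minimalPeriod_pos_iff_mem_periodicPts.1 hodd.pos) hk hl) (n - minimalPeriod f p)
  have hlen : n - minimalPeriod f p + (minimalPeriod f p - 1) + 1 = n := by
    have := hodd.pos
    omega
  rw [hlen] at hper
  refine ⟨y, ?_⟩
  by_contra hne
  have hyodd : Odd (minimalPeriod f y) := hn.of_dvd_nat hper.minimalPeriod_dvd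
  have hle : minimalPeriod f y - 1 ≤ n - minimalPeriod f p := by
    have h3 := three_mul_le_of_dvd_of_odd hn hper.minimalPeriod_dvd hne
    have h1 := hmin y hyodd
    omega
  have hy : y ∈ Icc p q := by
    simpa only [Nat.sub_add_cancel hyodd.pos, iterate_minimalPeriod] using hyJ _ hle
  have htwo := hgap.minimalPeriod_eq_two (hends y ⟨hyK, hy⟩) (hyJ 0 (Nat.zero_le _))
    (hyJ 1 (by omega))
  exact Nat.not_odd_iff_even.2 even_two (htwo ▸ hyodd)

theorem exists_minimalPeriod_eq_of_odd_of_lt (hf : Continuous f)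
    (hodd : Odd (minimalPeriod f x)) (hx : minimalPeriod f x ≠ 1) (hn : Odd n)
    (hlt : minimalPeriod f x < n) : ∃ y, minimalPeriod f y = n := by
  obtain ⟨z, hz⟩ := exists_minimalFor_of_wellFoundedLT
    (fun y => Odd (minimalPeriod f y) ∧ minimalPeriod f y ≠ 1) (minimalPeriod f) ⟨x, hodd, hx⟩
  have hmin : ∀ y, Odd (minimalPeriod f y) → minimalPeriod f y ≠ 1 →
      minimalPeriod f z ≤ minimalPeriod f y := fun y hy hy1 =>
    (le_total _ _).elim id fun h => hz.2 ⟨hy, hy1⟩ h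
  exact exists_minimalPeriod_eq_of_odd_of_forall_le hf hz.1.1 hz.1.2 hmin hn
    ((hmin x hodd hx).trans_lt hlt)

namespace IsHorseshoe

variable {g : α → α}

theorem exists_isPeriodicPt (h : IsHorseshoe g d t e) (hg : Continuous g) (hn : n ≠ 0) :
    ∃ y ∈ Icc d t, (∀ i, 0 < i → i < n → g^[i] y ∈ Icc t e) ∧ IsPeriodicPt g n y := by
  have hleft : SurjOn g (Icc d t) (Icc d e) :=
    (Icc_subset_Icc h.map_mid_le h.map_left.ge).trans
      (intermediate_value_Icc' h.left_lt.le hg.continuousOn)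
  have hright : SurjOn g (Icc t e) (Icc d e) :=
    (Icc_subset_Icc h.map_mid_le h.map_right.ge).trans
      (intermediate_value_Icc h.lt_right.le hg.continuousOn)
  have hdt : Icc d t ⊆ Icc d e := Icc_subset_Icc_right h.lt_right.le
  have hte : Icc t e ⊆ Icc d e := Icc_subset_Icc_left h.left_lt.le
  obtain rfl | hn1 := eq_or_ne n 1
  · obtain ⟨y, hy, hfix⟩ := exists_isFixedPt_of_surjOn h.left_lt.le isPreconnected_Icc
      hg.continuousOn Subset.rfl (hleft.mono Subset.rfl hdt)
    exact ⟨y, hy, fun i hi hi1 => by omega, hfix⟩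
  · obtain ⟨y, hy, hmem, hper⟩ := exists_isPeriodicPt_of_surjOn (r := 1) hg h.left_lt.le
      (hleft.mono Subset.rfl hte) (hright.mono Subset.rfl hte) (hright.mono Subset.rfl hdt) (n - 2)
    refine ⟨y, hy, fun i hi hin => ?_, by rwa [show n - 2 + 1 + 1 = n by omega] at hper⟩
    rw [← Nat.sub_add_cancel hi]
    exact hmem (i - 1) (by omega)

theorem exists_minimalPeriod_eq (h : IsHorseshoe g d t e) (hg : Continuous g) (hn : n ≠ 0) :
    ∃ y, (∀ i, g^[i] y ∈ Ioo d e) ∧ minimalPeriod g y = n := by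
  obtain ⟨y, hy, hmem, hper⟩ := h.exists_isPeriodicPt hg hn
  have hIoo := h.iterate_mem_Ioo hy hmem hper hn
  have hpos := hper.minimalPeriod_pos (Nat.pos_of_ne_zero hn)
  refine ⟨y, hIoo, (hper.minimalPeriod_le (Nat.pos_of_ne_zero hn)).eq_of_not_lt fun hlt => ?_⟩
  have hty := (hmem _ hpos hlt).1
  rw [iterate_minimalPeriod] at hty
  obtain rfl : y = t := le_antisymm hy.2 hty
  exact (hIoo 1).1.not_ge h.map_mid_le

end IsHorseshoe

theorem exists_map_eq_forall_iterate_two_lt (hf : Continuous f) (hpq : p < q) (hfp : q ≤ f p)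
    (hfq : f q ≤ p) (hq : q ∈ forwardOrbit f^[2] p) :
    ∃ v e z, p ≤ v ∧ v < e ∧ e ≤ z ∧ z < q ∧ f v = q ∧ f z = z ∧ f^[2] e = e ∧
      ∀ y ∈ Ico v e, f^[2] y < y := by
  obtain ⟨v, hv, hfv⟩ := intermediate_value_Icc' hpq.le hf.continuousOn ⟨hfq.trans hpq.le, hfp⟩
  have hfv2 : f^[2] v ≤ p := (congrArg f hfv).trans_le hfq
  obtain ⟨z, hz, hfz⟩ := exists_mem_Icc_isFixedPt hf.continuousOn hv.2
    (hv.2.trans_eq hfv.symm) (hfq.trans hpq.le)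
  have hzq : z < q := hz.2.lt_of_ne <| by
    rintro rfl
    exact (hfz.symm.trans_le hfq).not_gt hpq
  obtain ⟨e, he, hfe, hlt⟩ := exists_first_eq hz.1 (hf.iterate 2).continuousOn continuousOn_id
    (hfv2.trans hv.1) (hfz.iterate 2).ge
  refine ⟨v, e, z, hv.1, he.1.lt_of_ne ?_, he.2, hzq, hfv, hfz, hfe, hlt⟩
  rintro rfl
  obtain rfl : v = p := le_antisymm (hfe.symm.trans_le hfv2) hv.1
  obtain ⟨l, rfl⟩ := hq
  exact hpq.ne (iterate_fixed hfe l).symm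

theorem exists_isHorseshoe_iterate_two (hf : Continuous f) (hpq : p < q) (hfp : q ≤ f p)
    (hfq : f q ≤ p) (hq : q ∈ forwardOrbit f^[2] p) :
    ∃ d t e, IsHorseshoe f^[2] d t e ∧ ∀ y ∈ Ioo d e, e < f y := by
  obtain ⟨v, e, z, hpv, hve, hez, hzq, hfv, hfz, hfe, hlt⟩ :=
    exists_map_eq_forall_iterate_two_lt hf hpq hfp hfq hq
  have hleave : ∀ s ⊆ Iio e, p ∈ s → ¬MapsTo f^[2] s s := fun s hs hp hmaps =>
    (hez.trans_lt hzq).not_gt (hs (forwardOrbit_subset_of_mapsTo hmaps hp hq))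
  obtain ⟨c, hce, hfc⟩ : ∃ c < e, e ≤ f^[2] c := by
    simpa [MapsTo] using hleave (Iio e) Subset.rfl (hpv.trans_lt hve)
  have hcv : c ≤ v := not_lt.1 fun hvc => ((hlt c ⟨hvc.le, hce⟩).trans hce).not_ge hfc
  have hfv_lt : f^[2] v < e := (hlt v ⟨le_rfl, hve⟩).trans hve
  obtain ⟨d, hd, hfd, hdlt⟩ := exists_last_eq hcv continuousOn_const (hf.iterate 2).continuousOn
    hfc hfv_lt.le
  have hdv : d < v := hd.2.lt_of_ne <| by
    rintro rfl
    exact hfv_lt.ne' hfd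
  have hlt_e : ∀ y ∈ Ioo d e, f^[2] y < e := fun y hy => (le_or_gt y v).elim
    (fun hyv => hdlt y ⟨hy.1, hyv⟩) (fun hvy => (hlt y ⟨hvy.le, hy.2⟩).trans hy.2)
  obtain ⟨t, ht, hft⟩ : ∃ t ∈ Ioo d e, f^[2] t ≤ d := by
    obtain hpd | hdp := le_or_gt p d
    · exact ⟨v, ⟨hdv, hve⟩, (congrArg f hfv).trans_le (hfq.trans hpd)⟩
    · by_contra! hinv
      exact hleave (Ioo d e) (fun y hy => hy.2) ⟨hdp, hpv.trans_lt hve⟩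
        fun y hy => ⟨hinv y hy, hlt_e y hy⟩
  refine ⟨d, t, e, ⟨ht.1, ht.2, hfd.symm, hfe, hft⟩, fun y hy => hez.trans_lt ?_⟩
  by_contra! hfy
  obtain ⟨w, hw, hfw⟩ := isPreconnected_Ioo.intermediate_value hy ⟨hdv, hve⟩ hf.continuousOn
    ⟨hfy, hzq.le.trans_eq hfv.symm⟩
  exact (hez.trans_eq (by rw [iterate_succ_apply, iterate_one, hfw, hfz])).not_gt (hlt_e w hw)

theorem exists_minimalPeriod_eq_two_mul (hf : Continuous f) (hodd : Odd (minimalPeriod f x))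
    (hx : minimalPeriod f x ≠ 1) (hn : n ≠ 0) : ∃ y, minimalPeriod f y = 2 * n := by
  obtain ⟨p, q, hp, hgap⟩ := exists_isTurningGap_forwardOrbit (f := f) (x := x)
    (by have := hodd.pos; omega)
  obtain ⟨d, t, e, hshoe, hgt⟩ := exists_isHorseshoe_iterate_two hf hgap.lt hgap.right_le_map
    hgap.map_le_left (forwardOrbit_subset_forwardOrbit_iterate_two (hp ▸ hodd) hgap.right_mem)
  obtain ⟨y, hmem, hper⟩ := hshoe.exists_minimalPeriod_eq (hf.iterate 2) hn
  have heven := even_minimalPeriod_of_forall_notMem hmem fun w hw hfw => (hgt w hw).not_gt hfw.2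
  exact ⟨y, by rw [← hper, mul_minimalPeriod_iterate_of_dvd two_ne_zero heven.two_dvd]⟩

theorem exists_minimalPeriod_eq_two_pow_mul_of_lt {i k : ℕ} (hf : Continuous f) (hm : Odd m)
    (hm1 : m ≠ 1) (hx : minimalPeriod f x = 2 ^ i * m) (hik : i < k) (hn : n ≠ 0) :
    ∃ y, minimalPeriod f y = 2 ^ k * n := by
  obtain ⟨l, rfl⟩ := Nat.exists_eq_add_of_lt hik
  have hx' : minimalPeriod f^[2 ^ i] x = m := minimalPeriod_iterate_of_eq_mul (by positivity) hx
  obtain ⟨y, hy⟩ := exists_minimalPeriod_eq_two_mul (n := 2 ^ l * n) (hf.iterate (2 ^ i))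
    (hx' ▸ hm) (hx' ▸ hm1) (by positivity)
  refine ⟨y, ?_⟩
  rw [minimalPeriod_eq_prime_pow_mul_of_dvd Nat.prime_two (hy ▸ dvd_mul_right 2 _), hy]
  ring

theorem exists_minimalPeriod_eq_two_pow_mul_of_odd_of_lt {i : ℕ} (hf : Continuous f) (hm : Odd m)
    (hm1 : m ≠ 1) (hx : minimalPeriod f x = 2 ^ i * m) (hn : Odd n) (hmn : m < n) :
    ∃ y, minimalPeriod f y = 2 ^ i * n := by
  have hx' : minimalPeriod f^[2 ^ i] x = m := minimalPeriod_iterate_of_eq_mul (by positivity) hx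
  obtain ⟨y, rfl⟩ := exists_minimalPeriod_eq_of_odd_of_lt (hf.iterate (2 ^ i))
    (hx' ▸ hm) (hx' ▸ hm1) hn (hx' ▸ hmn)
  obtain ⟨j, hji, hy⟩ := exists_minimalPeriod_eq_prime_pow_mul (f := f) (x := y) Nat.prime_two i
  obtain rfl | hji := hji.eq_or_lt
  · exact ⟨y, hy⟩
  · exact exists_minimalPeriod_eq_two_pow_mul_of_lt hf hn (Nat.lt_of_le_of_lt hm.pos hmn).ne' hy hji
      hn.pos.ne'

theorem exists_minimalPeriod_eq_two_pow {k : ℕ} (hf : Continuous f) (hx : minimalPeriod f x ≠ 0)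
    (hk : 2 ^ k ∣ minimalPeriod f x) : ∃ y, minimalPeriod f y = 2 ^ k := by
  cases k with
  | zero =>
    obtain ⟨y, hy⟩ := exists_isFixedPt_of_minimalPeriod_ne_zero hf hx
    exact ⟨y, minimalPeriod_eq_one_iff_isFixedPt.2 hy⟩
  | succ k =>
    obtain ⟨c, hc⟩ := hk
    rw [pow_succ, mul_assoc] at hc
    have hx' : minimalPeriod f^[2 ^ k] x = 2 * c :=
      minimalPeriod_iterate_of_eq_mul (by positivity) hc
    have hc0 : c ≠ 0 := by
      rintro rfl
      exact hx hc
    obtain ⟨y, hy⟩ := exists_minimalPeriod_eq_two (x := x) (hf.iterate (2 ^ k)) (by omega)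
    exact ⟨y, by rw [minimalPeriod_eq_prime_pow_mul_of_dvd Nat.prime_two hy.symm.dvd, hy, pow_succ]⟩

theorem exists_minimalPeriod_eq_of_sharkLt (hf : Continuous f) (hx : minimalPeriod f x ≠ 0)
    (h : SharkLt m (minimalPeriod f x)) : ∃ y, minimalPeriod f y = m := by
  have hodd := odd_oddPart hx
  have hm_odd := odd_oddPart h.ne_zero
  have hper := (two_pow_factorization_mul_oddPart (minimalPeriod f x)).symm
  rw [← two_pow_factorization_mul_oddPart m]
  rcases h with ⟨hm, hn, hlt⟩ | ⟨hm, hn⟩ | ⟨-, hn, hlt | ⟨heq, hlt⟩⟩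
  · rw [← two_pow_factorization_mul_oddPart m, hper, hm, hn, mul_one, mul_one] at hlt
    rw [hm, mul_one]
    refine exists_minimalPeriod_eq_two_pow hf hx ((pow_dvd_pow 2 ?_).trans (Nat.ordProj_dvd _ 2))
    exact ((Nat.pow_lt_pow_iff_right one_lt_two).1 hlt).le
  · obtain hle | hlt := le_or_gt (m.factorization 2) ((minimalPeriod f x).factorization 2)
    · rw [hm, mul_one]
      exact exists_minimalPeriod_eq_two_pow hf hx ((pow_dvd_pow 2 hle).trans (Nat.ordProj_dvd _ 2))
    · exact exists_minimalPeriod_eq_two_pow_mul_of_lt hf hodd hn hper hlt hm_odd.pos.ne'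
  · exact exists_minimalPeriod_eq_two_pow_mul_of_lt hf hodd hn hper hlt hm_odd.pos.ne'
  · rw [heq]
    exact exists_minimalPeriod_eq_two_pow_mul_of_odd_of_lt hf hodd hn hper hm_odd hlt

end LinearContinuum

/-- The set of periods of the cycles of `f` lying in `s`, that is `periodsOn` for a self-map of an
arbitrary type. -/
def cyclePeriods {α : Type*} (f : α → α) (s : Set α) : Set ℕ :=
  {n | 0 < n ∧ ∃ x ∈ s, minimalPeriod f x = n}

theorem cyclePeriods_eq_cyclePeriods_restrict {α : Type*} {f : α → α} {s : Set α}
    (h : MapsTo f s s) : cyclePeriods f s = cyclePeriods (h.restrict f s s) univ := by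
  have hper : ∀ x : s, minimalPeriod (h.restrict f s s) x = minimalPeriod f x := fun x =>
    minimalPeriod_eq_minimalPeriod_iff.2 fun n => by
      rw [IsPeriodicPt, IsPeriodicPt, IsFixedPt, IsFixedPt, Subtype.ext_iff,
        MapsTo.coe_iterate_restrict]
  ext n
  simp [cyclePeriods, hper]

theorem sharkovsky_forward_general {α : Type*} [ConditionallyCompleteLinearOrder α]
    [TopologicalSpace α] [OrderTopology α] [DenselyOrdered α] {f : α → α} {s : Set α}
    (hs : s.OrdConnected) (hf : ContinuousOn f s) (hmaps : MapsTo f s s)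
    (hper : (s ∩ periodicPts f).Nonempty) :
    (∃ n : ℕ, 0 < n ∧ cyclePeriods f s = sharkSegment n) ∨
      cyclePeriods f s = {m : ℕ | ∃ k : ℕ, m = 2 ^ k} := by
  obtain ⟨x, hxs, hx⟩ := hper
  have hne : (cyclePeriods f s).Nonempty :=
    ⟨_, minimalPeriod_pos_of_mem_periodicPts hx, x, hxs, rfl⟩
  let : Inhabited s := ⟨⟨x, hxs⟩⟩
  have hlower : ∀ n ∈ cyclePeriods f s, ∀ m, SharkLt m n → m ∈ cyclePeriods f s := by
    rw [cyclePeriods_eq_cyclePeriods_restrict hmaps]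
    rintro _ ⟨hn, y, -, rfl⟩ m hm
    obtain ⟨z, hz⟩ := exists_minimalPeriod_eq_of_sharkLt (hf.mapsToRestrict hmaps) hn.ne' hm
    exact ⟨Nat.pos_of_ne_zero hm.ne_zero, z, mem_univ z, hz⟩
  exact (exists_eq_sharkSegment_or_eq_setOf_two_pow hne hlower).imp_left
    fun ⟨n, hn, heq⟩ => ⟨n, hn.1, heq⟩

/-- **Sharkovsky's Theorem (first half).** For every continuous map `f` of a closed
interval into itself there is `n ∈ ℕ ∪ {2^∞}` with `P(f) = S(n)`. -/
theorem sharkovsky_forward (a b : ℝ) (hab : a ≤ b) (f : ℝ → ℝ)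
    (hf : ContinuousOn f (Set.Icc a b))
    (hmaps : Set.MapsTo f (Set.Icc a b) (Set.Icc a b)) :
    (∃ n : ℕ, 0 < n ∧ periodsOn f (Set.Icc a b) = sharkSegment n) ∨
      periodsOn f (Set.Icc a b) = {m : ℕ | ∃ k : ℕ, m = 2 ^ k} := by
  obtain ⟨x, hx, hfix⟩ := exists_mem_Icc_isFixedPt_of_mapsTo hf hab hmaps
  exact sharkovsky_forward_general Set.ordConnected_Icc hf hmaps
    ⟨x, hx, Function.mk_mem_periodicPts one_pos hfix⟩
end

section
/- For every n in ℕ ∪ {2^∞} there exists a continuous map f : [0,1] → [0,1] such that the set P(f) of periods of all cycles of f equals the initial segment S(n) of the Sharkovsky ordering. -/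
/-!
Write `n = 2 ^ k * q` with `q` odd. The doubling operator `f ↦ doubling f` puts a copy of `f` into
the second iterate on `[0, 1/3]`, exchanges `[0, 1/3]` with `[2/3, 1]` and expands on the middle
third. Hence it doubles all periods and adds a single fixed point, which is what `n ↦ 2 * n` does
to the segments `S(n)`, and it suffices to realize `S(q)`.

For `q = 1` the identity works. For odd `q > 1`, consider the skew tent map on `[-4, 2]` that sends
`-4 ↦ -b`, `-1 ↦ 2` and is `x ↦ -2 * x` on `[-1, 2]`. An orbit of odd period `m > 1` visits two
negative points in a row, so it enters `[-b, 0)` from `[-4, -1]`. From there on each step multiplies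
by `-2` until the orbit is back in `[-4, -1]`, which takes an even number of steps, at most `m - 1`,
and this forces `2 ^ (m - 1) * b` to be at least `4`. Conversely, the intermediate value theorem
produces such orbits, and orbits of every even period, so `b = 4 / 2 ^ (q - 1)` gives exactly the
periods in `S(q)`.

The operator `doubling` contracts the uniform distance by the factor `3`, and the set `A` of
periods of its fixed point satisfies `A = {1} ∪ 2 * A`, that is, `A = {1, 2, 4, 8, …}`.
-/

open Function Set

/-! ### Periodic points -/

section PeriodicPoints

variable {α β : Type*}

lemma minimalPeriod_eq_of_semiconjOn {f : α → α} {g : β → β} {φ : α → β} {s : Set α}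
    (hf : MapsTo f s s) (hφ : InjOn φ s) (hsemi : ∀ x ∈ s, φ (f x) = g (φ x)) {x : α}
    (hx : x ∈ s) : minimalPeriod g (φ x) = minimalPeriod f x := by
  have hiter (n : ℕ) : g^[n] (φ x) = φ (f^[n] x) := by
    induction n with
    | zero => rfl
    | succ n ih => rw [iterate_succ_apply', ih, iterate_succ_apply', hsemi _ (hf.iterate n hx)]
  refine minimalPeriod_eq_minimalPeriod_iff.2 fun n => ?_
  rw [IsPeriodicPt, IsFixedPt, hiter, hφ.eq_iff (hf.iterate n hx) hx, IsPeriodicPt, IsFixedPt]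

lemma even_of_isPeriodicPt_of_alternating {f : α → α} {P : α → Prop} {x : α} {n : ℕ}
    (halt : ∀ i, P (f^[i + 1] x) ↔ ¬P (f^[i] x)) (hx : IsPeriodicPt f n x) : Even n := by
  have hiter (i : ℕ) : P (f^[i] x) ↔ (P x ↔ Even i) := by
    induction i with
    | zero => simp
    | succ i ih => rw [halt, ih, Nat.even_add_one]; tauto
  have hn := hiter n
  rw [hx.eq] at hn
  tauto

lemma even_minimalPeriod_of_mapsTo {f : α → α} {u v : Set α} (huv : MapsTo f u v)
    (hvu : MapsTo f v u) (hdisj : Disjoint u v) {x : α} (hx : x ∈ u) :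
    Even (minimalPeriod f x) := by
  have hmem (i : ℕ) : f^[i] x ∈ u ∪ v :=
    (show MapsTo f (u ∪ v) (u ∪ v) from
      fun _ hy => hy.elim (fun h => .inr (huv h)) fun h => .inl (hvu h)).iterate i (.inl hx)
  refine even_of_isPeriodicPt_of_alternating (P := (· ∈ u)) (fun i => ?_)
    (isPeriodicPt_minimalPeriod f x)
  rw [iterate_succ_apply']
  rcases hmem i with hi | hi
  · exact iff_of_false (hdisj.notMem_of_mem_right (huv hi)) (not_not.2 hi)
  · exact iff_of_true (hvu hi) (hdisj.notMem_of_mem_right hi)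

lemma isFixedPt_of_isPeriodicPt_of_expanding [MetricSpace α] {f : α → α} {s : Set α} {c : ℝ}
    (hc : 1 < c) (hexp : ∀ y ∈ s, ∀ z ∈ s, c * dist y z ≤ dist (f y) (f z)) {x : α}
    (hs : ∀ i, f^[i] x ∈ s) {n : ℕ} (hn : n ≠ 0) (hx : IsPeriodicPt f n x) : IsFixedPt f x := by
  have hgrow (i : ℕ) : c ^ i * dist (f x) x ≤ dist (f^[i] (f x)) (f^[i] x) := by
    induction i with
    | zero => simp
    | succ i ih =>
      calc c ^ (i + 1) * dist (f x) x = c * (c ^ i * dist (f x) x) := by ring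
        _ ≤ c * dist (f^[i] (f x)) (f^[i] x) := by gcongr
        _ ≤ dist (f^[i + 1] (f x)) (f^[i + 1] x) := by
          rw [iterate_succ_apply', iterate_succ_apply']
          exact hexp _ (hs (i + 1)) _ (hs i)
  have hle : c ^ n * dist (f x) x ≤ dist (f x) x := by
    simpa only [hx.apply.eq, hx.eq] using hgrow n
  have hcn : 1 < c ^ n := one_lt_pow₀ hc hn
  exact dist_le_zero.1 (by nlinarith)

end PeriodicPoints

/-! ### Sets of periods -/

/-- The sets of periods of continuous self-maps of `[0, 1]`, encoded as in the theorem by functions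
on `ℝ` of which only the restriction to `[0, 1]` matters. -/
def IsIntervalPeriodSet (A : Set ℕ) : Prop :=
  ∃ f : ℝ → ℝ, ContinuousOn f (Icc 0 1) ∧ MapsTo f (Icc 0 1) (Icc 0 1) ∧ periodsOn f (Icc 0 1) = A

lemma zero_notMem_periodsOn (f : ℝ → ℝ) (s : Set ℝ) : 0 ∉ periodsOn f s :=
  fun h => h.1.false

lemma one_mem_periodsOn_Icc {f : ℝ → ℝ} {a c : ℝ} (hac : a ≤ c) (hf : ContinuousOn f (Icc a c))
    (hmaps : MapsTo f (Icc a c) (Icc a c)) : 1 ∈ periodsOn f (Icc a c) := by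
  obtain ⟨x, hx, hfix⟩ := exists_mem_Icc_isFixedPt_of_mapsTo hf hac hmaps
  exact ⟨one_pos, x, hx, minimalPeriod_eq_one_iff_isFixedPt.2 hfix⟩

lemma isIntervalPeriodSet_periodsOn_Icc {f : ℝ → ℝ} {a c : ℝ} (hac : a < c)
    (hf : ContinuousOn f (Icc a c)) (hmaps : MapsTo f (Icc a c) (Icc a c)) :
    IsIntervalPeriodSet (periodsOn f (Icc a c)) := by
  let e : ℝ ≃ₜ ℝ := affineHomeomorph (c - a) a (sub_pos.2 hac).ne'
  have himage : e '' Icc 0 1 = Icc a c := by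
    rw [affineHomeomorph_image_I _ _ (sub_pos.2 hac), sub_add_cancel]
  have he : MapsTo e (Icc 0 1) (Icc a c) := himage ▸ mapsTo_image e _
  have he_symm : MapsTo e.symm (Icc a c) (Icc 0 1) := by
    rw [← himage]
    rintro _ ⟨x, hx, rfl⟩
    rwa [e.symm_apply_apply]
  have hconj : MapsTo (e.symm ∘ f ∘ e) (Icc 0 1) (Icc 0 1) := he_symm.comp (hmaps.comp he)
  refine ⟨e.symm ∘ f ∘ e, e.symm.continuous.comp_continuousOn
    (hf.comp e.continuous.continuousOn he), hconj, ?_⟩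
  have hperiod (x : ℝ) (hx : x ∈ Icc 0 1) :
      minimalPeriod f (e x) = minimalPeriod (e.symm ∘ f ∘ e) x :=
    minimalPeriod_eq_of_semiconjOn hconj e.injective.injOn (fun y _ => by simp) hx
  ext m
  simp only [periodsOn, ← himage, exists_mem_image]
  exact and_congr_right fun _ => exists_congr fun x => and_congr_right fun hx => by
    rw [hperiod x hx]

lemma isIntervalPeriodSet_singleton_one : IsIntervalPeriodSet {1} := by
  refine ⟨id, continuousOn_id, mapsTo_id _, ?_⟩
  ext m
  constructor
  · rintro ⟨_, x, _, rfl⟩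
    exact minimalPeriod_id
  · rintro rfl
    exact ⟨one_pos, 0, by simp, minimalPeriod_id⟩

/-! ### The doubling operator -/

/-- The doubling operator on self-maps of `[0, 1]`: the graph of `doubling f` over `[0, 1/3]` is a
copy of the graph of `f` scaled by `1/3` and raised to height `2/3`, over `[2/3, 1]` it is that of
`x ↦ x - 2/3`, and between them it is a line segment. The projections to `[0, 1]` and `[0, 1/3]`
merge the three cases into one formula, in which `f` is only evaluated on `[0, 1]`. -/
noncomputable def doubling (f : ℝ → ℝ) (x : ℝ) : ℝ :=
  (2 + f (projIcc 0 1 zero_le_one (3 * x))) * max 0 (min (1 / 3) (2 / 3 - x)) + max 0 (x - 2 / 3)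

section Doubling

variable {f g : ℝ → ℝ} {x : ℝ}

lemma doubling_apply_left (hx : x ∈ Icc 0 (1 / 3)) : doubling f x = (2 + f (3 * x)) / 3 := by
  obtain ⟨h0, h1⟩ := hx
  rw [doubling, projIcc_of_mem _ (show 3 * x ∈ Icc (0 : ℝ) 1 from ⟨by linarith, by linarith⟩),
    min_eq_left (by linarith), max_eq_right (by norm_num), max_eq_left (by linarith)]
  ring

lemma doubling_apply_middle (hx : x ∈ Icc (1 / 3) (2 / 3)) :
    doubling f x = (2 + f 1) * (2 / 3 - x) := by
  obtain ⟨h0, h1⟩ := hx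
  rw [doubling, projIcc_of_right_le _ (by linarith), min_eq_right (by linarith),
    max_eq_right (by linarith), max_eq_left (by linarith), add_zero]

lemma doubling_apply_right (hx : x ∈ Icc (2 / 3) 1) : doubling f x = x - 2 / 3 := by
  obtain ⟨h0, -⟩ := hx
  rw [doubling, min_eq_right (by linarith), max_eq_left (by linarith), max_eq_right (by linarith),
    mul_zero, zero_add]

lemma mapsTo_doubling_left (hf : MapsTo f (Icc 0 1) (Icc 0 1)) :
    MapsTo (doubling f) (Icc 0 (1 / 3)) (Icc (2 / 3) 1) := by
  intro x hx
  obtain ⟨h0, h1⟩ := hf (show 3 * x ∈ Icc 0 1 from ⟨by linarith [hx.1], by linarith [hx.2]⟩)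
  rw [doubling_apply_left hx]
  exact ⟨by linarith, by linarith⟩

lemma mapsTo_doubling_middle (hf : f 1 ∈ Icc 0 1) :
    MapsTo (doubling f) (Icc (1 / 3) (2 / 3)) (Icc 0 1) := by
  intro x hx
  rw [doubling_apply_middle hx]
  obtain ⟨⟨h0, h1⟩, hx0, hx1⟩ := And.intro hf hx
  exact ⟨by nlinarith, by nlinarith⟩

lemma mapsTo_doubling_right (f : ℝ → ℝ) : MapsTo (doubling f) (Icc (2 / 3) 1) (Icc 0 (1 / 3)) := by
  intro x hx
  rw [doubling_apply_right hx]
  exact ⟨by linarith [hx.1], by linarith [hx.2]⟩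

lemma mem_thirds_of_mem_Icc (hx : x ∈ Icc 0 1) :
    x ∈ Icc 0 (1 / 3) ∨ x ∈ Icc (1 / 3) (2 / 3) ∨ x ∈ Icc (2 / 3) 1 := by
  simp only [mem_Icc] at hx ⊢
  grind

lemma mapsTo_doubling (hf : MapsTo f (Icc 0 1) (Icc 0 1)) :
    MapsTo (doubling f) (Icc 0 1) (Icc 0 1) := by
  intro x hx
  rcases mem_thirds_of_mem_Icc hx with h | h | h
  · exact Icc_subset_Icc_left (by norm_num) (mapsTo_doubling_left hf h)
  · exact mapsTo_doubling_middle (hf (right_mem_Icc.2 zero_le_one)) h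
  · exact Icc_subset_Icc_right (by norm_num) (mapsTo_doubling_right f h)

lemma continuous_doubling (hf : ContinuousOn f (Icc 0 1)) : Continuous (doubling f) := by
  have hproj : Continuous fun x : ℝ => f (projIcc 0 1 zero_le_one (3 * x)) :=
    hf.comp_continuous (by fun_prop) fun x => (projIcc 0 1 zero_le_one (3 * x)).2
  exact ((continuous_const.add hproj).mul (by fun_prop)).add (by fun_prop)

lemma doubling_congr (h : EqOn f g (Icc 0 1)) : doubling f = doubling g := by
  ext x
  rw [doubling, doubling, h (projIcc 0 1 zero_le_one (3 * x)).2]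

lemma abs_doubling_sub_doubling_le {C : ℝ} (h : ∀ t ∈ Icc (0 : ℝ) 1, |f t - g t| ≤ C) (x : ℝ) :
    |doubling f x - doubling g x| ≤ 1 / 3 * C := by
  set t := (projIcc (0 : ℝ) 1 zero_le_one (3 * x)).val
  set r : ℝ := max 0 (min (1 / 3) (2 / 3 - x))
  have hr0 : 0 ≤ r := le_max_left _ _
  have hr1 : r ≤ 1 / 3 := max_le (by norm_num) (min_le_left _ _)
  have hdiff : doubling f x - doubling g x = r * (f t - g t) := by
    simp only [doubling, r, t]
    ring
  calc |doubling f x - doubling g x| = r * |f t - g t| := by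
        rw [hdiff, abs_mul, abs_of_nonneg hr0]
    _ ≤ 1 / 3 * C := mul_le_mul hr1 (h t (Subtype.prop _)) (abs_nonneg _) (by norm_num)

lemma minimalPeriod_doubling (hf : MapsTo f (Icc 0 1) (Icc 0 1)) (hx : x ∈ Icc 0 1) :
    minimalPeriod (doubling f) (x / 3) = 2 * minimalPeriod f x := by
  have hthird {y : ℝ} (hy : y ∈ Icc 0 1) : y / 3 ∈ Icc (0 : ℝ) (1 / 3) :=
    ⟨by linarith [hy.1], by linarith [hy.2]⟩
  have hsemi (y : ℝ) (hy : y ∈ Icc 0 1) : f y / 3 = (doubling f)^[2] (y / 3) := by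
    rw [iterate_succ_apply, iterate_one,
      doubling_apply_right (mapsTo_doubling_left hf (hthird hy)),
      doubling_apply_left (hthird hy), mul_div_cancel₀ y three_ne_zero]
    ring
  have hhalf : minimalPeriod (doubling f)^[2] (x / 3) = minimalPeriod f x :=
    minimalPeriod_eq_of_semiconjOn (φ := (· / 3)) hf
      (fun _ _ _ _ h => (div_left_inj' three_ne_zero).1 h) hsemi hx
  have heven : 2 ∣ minimalPeriod (doubling f) (x / 3) :=
    (even_minimalPeriod_of_mapsTo (mapsTo_doubling_left hf) (mapsTo_doubling_right f)
      (disjoint_left.2 fun y hy hy' => by linarith [hy.2, hy'.1]) (hthird hx)).two_dvd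
  rw [minimalPeriod_iterate_eq_div_gcd two_ne_zero, Nat.gcd_eq_right heven] at hhalf
  omega

lemma isFixedPt_doubling_or_exists_iterate_mem_left (hf : MapsTo f (Icc 0 1) (Icc 0 1))
    (hx : x ∈ Icc 0 1) (hper : x ∈ periodicPts (doubling f)) :
    IsFixedPt (doubling f) x ∨ ∃ i, (doubling f)^[i] x ∈ Icc 0 (1 / 3) := by
  by_cases hmid : ∀ i, (doubling f)^[i] x ∈ Icc (1 / 3) (2 / 3)
  · left
    obtain ⟨n, hn, hxn⟩ := hper
    have hslope : 1 < 2 + f 1 := by linarith [(hf (right_mem_Icc.2 zero_le_one)).1]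
    refine isFixedPt_of_isPeriodicPt_of_expanding hslope (fun y hy z hz => ?_) hmid hn.ne' hxn
    rw [doubling_apply_middle hy, doubling_apply_middle hz, Real.dist_eq, Real.dist_eq,
      ← mul_sub, abs_mul, abs_of_pos (zero_lt_one.trans hslope), sub_sub_sub_cancel_left,
      abs_sub_comm]
  · right
    obtain ⟨i, hi⟩ := not_forall.1 hmid
    rcases mem_thirds_of_mem_Icc ((mapsTo_doubling hf).iterate i hx) with h | h | h
    · exact ⟨i, h⟩
    · exact absurd h hi
    · exact ⟨i + 1, iterate_succ_apply' (doubling f) i x ▸ mapsTo_doubling_right f h⟩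

theorem periodsOn_doubling (hc : ContinuousOn f (Icc 0 1)) (hf : MapsTo f (Icc 0 1) (Icc 0 1)) :
    periodsOn (doubling f) (Icc 0 1) = insert 1 ((2 * ·) '' periodsOn f (Icc 0 1)) := by
  ext n
  constructor
  · rintro ⟨hn, x, hx, rfl⟩
    have hper : x ∈ periodicPts (doubling f) := minimalPeriod_pos_iff_mem_periodicPts.1 hn
    rcases isFixedPt_doubling_or_exists_iterate_mem_left hf hx hper with hfix | ⟨i, hi⟩
    · exact .inl (minimalPeriod_eq_one_iff_isFixedPt.2 hfix)
    · right
      set y := 3 * (doubling f)^[i] x with hy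
      have hyI : y ∈ Icc 0 1 := ⟨by linarith [hi.1], by linarith [hi.2]⟩
      have hdouble : 2 * minimalPeriod f y = minimalPeriod (doubling f) x := by
        rw [← minimalPeriod_doubling hf hyI, hy, mul_div_cancel_left₀ _ three_ne_zero,
          minimalPeriod_apply_iterate hper]
      exact ⟨_, ⟨by omega, y, hyI, rfl⟩, hdouble⟩
  · rintro (rfl | ⟨_, ⟨hm, x, hx, rfl⟩, rfl⟩)
    · exact one_mem_periodsOn_Icc zero_le_one (continuous_doubling hc).continuousOn
        (mapsTo_doubling hf)
    · exact ⟨mul_pos two_pos hm, x / 3, ⟨by linarith [hx.1], by linarith [hx.2]⟩,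
        minimalPeriod_doubling hf hx⟩

lemma exists_doubling_eq_self :
    ∃ f, ContinuousOn f (Icc 0 1) ∧ MapsTo f (Icc 0 1) (Icc 0 1) ∧ doubling f = f := by
  let extend (φ : C(Icc (0 : ℝ) 1, Icc (0 : ℝ) 1)) (x : ℝ) : ℝ := φ (projIcc 0 1 zero_le_one x)
  have hcont (φ) : ContinuousOn (extend φ) (Icc 0 1) := by
    have : Continuous (extend φ) := by fun_prop
    exact this.continuousOn
  have hmaps (φ) : MapsTo (extend φ) (Icc 0 1) (Icc 0 1) := fun _ _ => Subtype.prop _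
  let T (φ : C(Icc (0 : ℝ) 1, Icc (0 : ℝ) 1)) : C(Icc (0 : ℝ) 1, Icc (0 : ℝ) 1) :=
    ⟨(mapsTo_doubling (hmaps φ)).restrict,
      (continuous_doubling (hcont φ)).continuousOn.mapsToRestrict _⟩
  have hT : ContractingWith (1 / 3) T := by
    refine ⟨by rw [← NNReal.coe_lt_coe]; norm_num, .of_dist_le_mul fun φ ψ => ?_⟩
    rw [ContinuousMap.dist_le (by positivity)]
    exact fun x => abs_doubling_sub_doubling_le
      (fun t _ => ContinuousMap.dist_apply_le_dist (f := φ) (g := ψ) _) x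
  have : Nonempty C(Icc (0 : ℝ) 1, Icc (0 : ℝ) 1) := ⟨.id _⟩
  let φ := hT.fixedPoint
  have hfix : EqOn (doubling (extend φ)) (extend φ) (Icc 0 1) := fun x hx => by
    have hx_fix : (T φ ⟨x, hx⟩ : ℝ) = φ ⟨x, hx⟩ := by rw [hT.fixedPoint_isFixedPt.eq]
    exact hx_fix.trans (by simp only [extend, projIcc_of_mem zero_le_one hx])
  exact ⟨doubling (extend φ), (continuous_doubling (hcont φ)).continuousOn,
    mapsTo_doubling (hmaps φ), doubling_congr hfix⟩

end Doubling

lemma eq_setOf_two_pow_of_eq_insert {A : Set ℕ} (h0 : 0 ∉ A) (hA : A = insert 1 ((2 * ·) '' A)) :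
    A = {m | ∃ k, m = 2 ^ k} := by
  ext m
  constructor
  · induction m using Nat.strong_induction_on with
    | _ m ih =>
      intro hm
      rcases hA.subset hm with rfl | ⟨l, hl, rfl⟩
      · exact ⟨0, rfl⟩
      · have hl0 : l ≠ 0 := ne_of_mem_of_not_mem hl h0
        obtain ⟨k, rfl⟩ := ih l (by dsimp only; omega) hl
        exact ⟨k + 1, (pow_succ' 2 k).symm⟩
  · rintro ⟨k, rfl⟩
    induction k with
    | zero => exact hA.superset (.inl rfl)
    | succ k ih => exact hA.superset (.inr ⟨2 ^ k, ih, (pow_succ' 2 k).symm⟩)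

lemma IsIntervalPeriodSet.insert_one_two_mul {A : Set ℕ} (hA : IsIntervalPeriodSet A) :
    IsIntervalPeriodSet (insert 1 ((2 * ·) '' A)) := by
  obtain ⟨f, hc, hf, rfl⟩ := hA
  exact ⟨doubling f, (continuous_doubling hc).continuousOn, mapsTo_doubling hf,
    periodsOn_doubling hc hf⟩

theorem isIntervalPeriodSet_two_pow : IsIntervalPeriodSet {m | ∃ k, m = 2 ^ k} := by
  obtain ⟨f, hc, hf, hfix⟩ := exists_doubling_eq_self
  refine ⟨f, hc, hf, eq_setOf_two_pow_of_eq_insert (zero_notMem_periodsOn f _) ?_⟩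
  rw [← periodsOn_doubling hc hf, hfix]

/-! ### Skew tent maps -/

/-- The skew tent map on `[-4, 2]` with peak `-1 ↦ 2`, left end `-4 ↦ -b`, and slope `-2` on the
right branch. The interval is chosen such that the fixed point of the right branch is `0`. -/
noncomputable def skewTent (b x : ℝ) : ℝ := min ((2 + b) / 3 * (x + 4) - b) (-2 * x)

section SkewTent

variable {b x : ℝ}

lemma skewTent_apply_left (hb : 0 ≤ b) (hx : x ≤ -1) :
    skewTent b x = (2 + b) / 3 * (x + 4) - b :=
  min_eq_left (by nlinarith)

lemma skewTent_apply_right (hb : 0 ≤ b) (hx : -1 ≤ x) : skewTent b x = -2 * x :=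
  min_eq_right (by nlinarith)

lemma continuous_skewTent (b : ℝ) : Continuous (skewTent b) := by
  unfold skewTent
  fun_prop

lemma mapsTo_skewTent (hb0 : 0 ≤ b) (hb4 : b ≤ 4) :
    MapsTo (skewTent b) (Icc (-4) 2) (Icc (-4) 2) := by
  rintro x ⟨h0, h1⟩
  rcases le_total x (-1) with h | h
  · rw [skewTent_apply_left hb0 h]
    exact ⟨by nlinarith, by nlinarith⟩
  · rw [skewTent_apply_right hb0 h]
    exact ⟨by linarith, by linarith⟩

lemma iterate_skewTent_eq (hb : 0 ≤ b) {n : ℕ} (hx : ∀ j < n, -1 ≤ (-2) ^ j * x) :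
    (skewTent b)^[n] x = (-2) ^ n * x := by
  induction n with
  | zero => simp
  | succ n ih =>
    rw [iterate_succ_apply', ih fun j hj => hx j (hj.trans n.lt_succ_self),
      skewTent_apply_right hb (hx n n.lt_succ_self)]
    ring

-- If `u = (-2) ^ j * x` were below `-1`, then `(-2) ^ (n - j) * u` would be positive for odd
-- `n - j`, and below `-4` for even `n - j`.
lemma neg_one_le_neg_two_pow_mul {n j : ℕ} (hj : j < n) (h : (-2) ^ n * x ∈ Icc (-4) 0) :
    -1 ≤ (-2) ^ j * x := by
  obtain ⟨k, rfl⟩ := Nat.exists_eq_add_of_lt hj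
  rw [add_assoc, add_comm, pow_add, mul_assoc] at h
  set u := (-2) ^ j * x
  by_contra! hu
  rcases Nat.even_or_odd (k + 1) with hk | hk
  · have hpow : (2 : ℝ) ^ 2 ≤ 2 ^ (k + 1) :=
      pow_le_pow_right₀ one_le_two (by obtain ⟨l, hl⟩ := hk; omega)
    rw [hk.neg_pow] at h
    nlinarith [h.1]
  · have hpow : (0 : ℝ) < 2 ^ (k + 1) := by positivity
    rw [hk.neg_pow] at h
    nlinarith [h.2]

lemma exists_neg_two_pow_mul_skewTent_eq (hb : 0 ≤ b) {n : ℕ} (hn : Odd n ∨ 4 ≤ 2 ^ n * b) :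
    ∃ p ∈ Icc (-4) (-1), (-2) ^ n * skewTent b p = p := by
  let F (p : ℝ) : ℝ := (-2) ^ n * skewTent b p - p
  have hF : ContinuousOn F (uIcc (-4) (-1)) := by
    have := continuous_skewTent b
    fun_prop
  have hleft : F (-4) = 4 - (-2) ^ n * b := by
    simp only [F, skewTent_apply_left hb (show (-4 : ℝ) ≤ -1 by norm_num)]
    ring
  have hright : F (-1) = (-2) ^ n * 2 + 1 := by
    simp only [F, skewTent_apply_right hb le_rfl]
    ring
  have hpow : (1 : ℝ) ≤ 2 ^ n := one_le_pow₀ one_le_two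
  have hzero : 0 ∈ uIcc (F (-4)) (F (-1)) := by
    rw [hleft, hright]
    rcases Nat.even_or_odd n with he | ho
    · have h4 : 4 ≤ 2 ^ n * b := hn.resolve_left (Nat.not_odd_iff_even.2 he)
      rw [he.neg_pow]
      exact mem_uIcc_of_le (by linarith) (by linarith)
    · rw [ho.neg_pow]
      exact mem_uIcc_of_ge (by linarith) (by nlinarith)
  obtain ⟨p, hp, hFp⟩ := intermediate_value_uIcc hF hzero
  rw [uIcc_of_le (by norm_num)] at hp
  exact ⟨p, hp, sub_eq_zero.1 hFp⟩

lemma minimalPeriod_skewTent_eq (hb : 0 ≤ b) {n : ℕ} (hx : x ∈ Icc (-4) (-1))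
    (hreturn : (-2) ^ n * skewTent b x = x) : minimalPeriod (skewTent b) x = n + 1 := by
  have hlt : x < -1 := by
    refine lt_of_le_of_ne hx.2 ?_
    rintro rfl
    rw [skewTent_apply_right hb le_rfl] at hreturn
    have habs : (2 : ℝ) ^ n * 2 = 1 := by simpa [abs_mul] using congrArg abs hreturn
    linarith [one_le_pow₀ (n := n) (one_le_two (α := ℝ))]
  have hge (j : ℕ) (hj : j < n) : -1 ≤ (-2) ^ j * skewTent b x :=
    neg_one_le_neg_two_pow_mul hj (by rw [hreturn]; exact ⟨hx.1, by linarith⟩)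
  have hiter {j : ℕ} (hj : j ≤ n) : (skewTent b)^[j + 1] x = (-2) ^ j * skewTent b x :=
    iterate_skewTent_eq hb fun i hi => hge i (hi.trans_le hj)
  have hper : IsPeriodicPt (skewTent b) (n + 1) x := (hiter le_rfl).trans hreturn
  refine (hper.minimalPeriod_le n.succ_pos).antisymm ?_
  by_contra! hlt_period
  obtain ⟨j, hj⟩ := Nat.exists_eq_succ_of_ne_zero (hper.minimalPeriod_pos n.succ_pos).ne'
  have hback : (skewTent b)^[j + 1] x = x := by
    rw [← Nat.succ_eq_add_one, ← hj]
    exact iterate_minimalPeriod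
  rw [hiter (by omega)] at hback
  linarith [hge j (by omega)]

lemma exists_iterate_neg_of_odd_period (hb : 0 ≤ b) (hodd : Odd (minimalPeriod (skewTent b) x))
    (hone : minimalPeriod (skewTent b) x ≠ 1) :
    ∃ i, (skewTent b)^[i] x < 0 ∧ skewTent b ((skewTent b)^[i] x) < 0 := by
  have hne (i : ℕ) : (skewTent b)^[i] x ≠ 0 := fun hi => by
    rw [← minimalPeriod_apply_iterate (minimalPeriod_pos_iff_mem_periodicPts.1 hodd.pos) i, hi,
      Ne, minimalPeriod_eq_one_iff_isFixedPt, IsFixedPt, skewTent_apply_right hb (by norm_num),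
      mul_zero] at hone
    exact hone rfl
  by_contra! hcon
  refine Nat.not_even_iff_odd.2 hodd (even_of_isPeriodicPt_of_alternating (P := (· < 0))
    (fun i => ?_) (isPeriodicPt_minimalPeriod (skewTent b) x))
  rw [iterate_succ_apply']
  refine ⟨fun hsucc hi => hsucc.not_ge (hcon i hi), fun hi => ?_⟩
  have hpos : 0 < (skewTent b)^[i] x := lt_of_le_of_ne (not_lt.1 hi) (hne i).symm
  rw [skewTent_apply_right hb (by linarith)]
  linarith

lemma four_le_two_pow_mul_of_isPeriodicPt (hb : 0 ≤ b) (hx : x ∈ Icc (-4) (-1))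
    (hneg : skewTent b x < 0) {n : ℕ} (hn0 : n ≠ 0) (hn : Even n)
    (hper : IsPeriodicPt (skewTent b) (n + 1) x) : 4 ≤ 2 ^ n * b := by
  have hval := skewTent_apply_left hb hx.2
  set w := skewTent b x with hw
  have hwb : -b ≤ w := by nlinarith [hx.1]
  by_cases hge : ∀ j < n, -1 ≤ (-2) ^ j * w
  · have hreturn : 2 ^ n * w = x := by
      rw [← hn.neg_pow, ← iterate_skewTent_eq hb hge, hw, ← iterate_succ_apply]
      exact hper
    have hpow : (2 : ℝ) ≤ 2 ^ n := le_self_pow₀ one_le_two hn0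
    have hslope : 1 ≤ 2 ^ n * ((2 + b) / 3) := by nlinarith
    have hkey : 2 ^ n * b - 4 = (2 ^ n * ((2 + b) / 3) - 1) * (x + 4) := by
      linear_combination 2 ^ n * hval - hreturn
    linarith [mul_nonneg (sub_nonneg.2 hslope) (neg_le_iff_add_nonneg.1 hx.1)]
  · push Not at hge
    obtain ⟨j, hj, hlt⟩ := hge
    have hjeven : Even j := by
      by_contra hjodd
      rw [(Nat.not_even_iff_odd.1 hjodd).neg_pow] at hlt
      nlinarith [pow_pos (zero_lt_two (α := ℝ)) j]
    rw [hjeven.neg_pow] at hlt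
    have hpow : (2 : ℝ) ^ (j + 2) ≤ 2 ^ n :=
      pow_le_pow_right₀ one_le_two (by obtain ⟨⟨k, rfl⟩, l, rfl⟩ := And.intro hn hjeven; omega)
    calc (4 : ℝ) ≤ 4 * (2 ^ j * b) := by nlinarith [pow_pos (zero_lt_two (α := ℝ)) j]
      _ = 2 ^ (j + 2) * b := by ring
      _ ≤ 2 ^ n * b := by gcongr

lemma four_le_two_pow_mul_of_odd_minimalPeriod (hb0 : 0 ≤ b) (hb4 : b ≤ 4) (hx : x ∈ Icc (-4) 2)
    (hodd : Odd (minimalPeriod (skewTent b) x)) (hone : minimalPeriod (skewTent b) x ≠ 1) :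
    4 ≤ 2 ^ (minimalPeriod (skewTent b) x - 1) * b := by
  obtain ⟨i, hneg, hneg_succ⟩ := exists_iterate_neg_of_odd_period hb0 hodd hone
  have hmem := (mapsTo_skewTent hb0 hb4).iterate i hx
  have hle : (skewTent b)^[i] x ≤ -1 := by
    by_contra! h
    rw [skewTent_apply_right hb0 h.le] at hneg_succ
    linarith
  have hpos := hodd.pos
  refine four_le_two_pow_mul_of_isPeriodicPt hb0 ⟨hmem.1, hle⟩ hneg_succ (by omega)
    (hodd.tsub_odd odd_one) ?_
  rw [Nat.sub_add_cancel hpos]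
  exact (isPeriodicPt_minimalPeriod _ x).apply_iterate i

theorem periodsOn_skewTent (hb0 : 0 ≤ b) (hb4 : b ≤ 4) :
    periodsOn (skewTent b) (Icc (-4) 2) =
      {m | 0 < m ∧ (m = 1 ∨ Even m ∨ 4 ≤ 2 ^ (m - 1) * b)} := by
  ext m
  constructor
  · rintro ⟨hm, x, hx, rfl⟩
    refine ⟨hm, or_iff_not_imp_left.2 fun hone => ?_⟩
    exact (Nat.even_or_odd _).imp_right fun hodd =>
      four_le_two_pow_mul_of_odd_minimalPeriod hb0 hb4 hx hodd hone
  · rintro ⟨hm, rfl | h⟩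
    · exact one_mem_periodsOn_Icc (by norm_num) (continuous_skewTent b).continuousOn
        (mapsTo_skewTent hb0 hb4)
    · have hn : Odd (m - 1) ∨ 4 ≤ 2 ^ (m - 1) * b :=
        h.imp_left fun he => Nat.Even.sub_odd hm he odd_one
      obtain ⟨p, hp, hreturn⟩ := exists_neg_two_pow_mul_skewTent_eq hb0 hn
      refine ⟨hm, p, Icc_subset_Icc_right (by norm_num) hp, ?_⟩
      rw [minimalPeriod_skewTent_eq hb0 hp hreturn, Nat.sub_add_cancel hm]

end SkewTent

theorem isIntervalPeriodSet_one_or_even_or_lt (n : ℕ) :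
    IsIntervalPeriodSet {m | 0 < m ∧ (m = 1 ∨ Even m ∨ n < m)} := by
  have hb4 : (4 : ℝ) / 2 ^ n ≤ 4 := div_le_self (by norm_num) (one_le_pow₀ one_le_two)
  have hpow (m : ℕ) (hm : 0 < m) : 4 ≤ (2 : ℝ) ^ (m - 1) * (4 / 2 ^ n) ↔ n < m := by
    rw [← mul_div_assoc, le_div_iff₀ (by positivity), mul_comm, mul_le_mul_iff_left₀ four_pos,
      pow_le_pow_iff_right₀ one_lt_two, Nat.le_sub_one_iff_lt hm]
  have hset : periodsOn (skewTent (4 / 2 ^ n)) (Icc (-4) 2) =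
      {m | 0 < m ∧ (m = 1 ∨ Even m ∨ n < m)} := by
    rw [periodsOn_skewTent (by positivity) hb4]
    ext m
    exact and_congr_right fun hm => by rw [hpow m hm]
  exact hset ▸ isIntervalPeriodSet_periodsOn_Icc (by norm_num)
    (continuous_skewTent _).continuousOn (mapsTo_skewTent (by positivity) hb4)

/-! ### Initial segments of the Sharkovsky ordering -/

section SharkSegment

variable {m n : ℕ}

lemma oddPart_of_odd (hn : Odd n) : oddPart n = n :=
  (Nat.ordCompl_eq_self_iff_zero_or_not_dvd n Nat.prime_two).2 (.inr hn.not_two_dvd_nat)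

lemma oddPart_two_mul (n : ℕ) : oddPart (2 * n) = oddPart n := by
  simpa only [oddPart, pow_one] using Nat.ordCompl_self_pow_mul n 1 Nat.prime_two

lemma factorization_two_of_odd (hn : Odd n) : n.factorization 2 = 0 :=
  Nat.factorization_eq_zero_of_not_dvd hn.not_two_dvd_nat

lemma factorization_two_mul (hn : n ≠ 0) : (2 * n).factorization 2 = n.factorization 2 + 1 := by
  rw [Nat.factorization_mul two_ne_zero hn, Finsupp.add_apply, Nat.prime_two.factorization_self,
    add_comm]

lemma zero_notMem_sharkSegment (hn : n ≠ 0) : 0 ∉ sharkSegment n := by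
  simp [sharkSegment, SharkLt, oddPart, hn.symm]

lemma sharkSegment_one : sharkSegment 1 = {1} := by
  ext m
  rcases eq_or_ne m 0 with rfl | hm
  · simp [zero_notMem_sharkSegment]
  · simp only [sharkSegment, SharkLt, mem_ofPred_eq, oddPart_of_odd odd_one, mem_singleton_iff]
    omega

lemma sharkSegment_of_odd (hn : Odd n) (hn1 : n ≠ 1) :
    sharkSegment n = {m | 0 < m ∧ (m = 1 ∨ Even m ∨ n ≤ m)} := by
  ext m
  rcases eq_or_ne m 0 with rfl | hm
  · simp [zero_notMem_sharkSegment hn.pos.ne']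
  rcases Nat.even_or_odd m with he | ho
  · have := Nat.prime_two.factorization_pos_of_dvd hm he.two_dvd
    simp only [sharkSegment, SharkLt, mem_ofPred_eq, oddPart_of_odd hn,
      factorization_two_of_odd hn]
    grind
  · simp only [sharkSegment, SharkLt, mem_ofPred_eq, oddPart_of_odd hn, oddPart_of_odd ho,
      factorization_two_of_odd hn, factorization_two_of_odd ho]
    grind

lemma two_mul_mem_sharkSegment_two_mul (hn : n ≠ 0) :
    2 * m ∈ sharkSegment (2 * n) ↔ m ∈ sharkSegment n := by
  rcases eq_or_ne m 0 with rfl | hm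
  · simp [zero_notMem_sharkSegment, hn]
  · simp only [sharkSegment, SharkLt, mem_ofPred_eq, oddPart_two_mul, factorization_two_mul hn,
      factorization_two_mul hm]
    grind

lemma mem_sharkSegment_two_mul_of_odd (hn : n ≠ 0) (hm : Odd m) :
    m ∈ sharkSegment (2 * n) ↔ m = 1 := by
  simp only [sharkSegment, SharkLt, mem_ofPred_eq, oddPart_two_mul, factorization_two_mul hn,
    oddPart_of_odd hm, factorization_two_of_odd hm]
  grind

theorem sharkSegment_two_mul (hn : n ≠ 0) :
    sharkSegment (2 * n) = insert 1 ((2 * ·) '' sharkSegment n) := by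
  ext m
  rcases Nat.even_or_odd' m with ⟨l, rfl | rfl⟩
  · rw [two_mul_mem_sharkSegment_two_mul hn, mem_insert_iff,
      (mul_right_injective₀ two_ne_zero).mem_set_image]
    exact (or_iff_right (by omega)).symm
  · rw [mem_sharkSegment_two_mul_of_odd hn (odd_two_mul_add_one l), mem_insert_iff]
    exact (or_iff_left (by rintro ⟨k, -, hk⟩; dsimp only at hk; omega)).symm

end SharkSegment

theorem isIntervalPeriodSet_sharkSegment {n : ℕ} (hn : n ≠ 0) :
    IsIntervalPeriodSet (sharkSegment n) := by
  induction n using Nat.evenOddRec with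
  | h0 => exact absurd rfl hn
  | h_even n ih =>
    have hn0 : n ≠ 0 := right_ne_zero_of_mul hn
    rw [sharkSegment_two_mul hn0]
    exact (ih hn0).insert_one_two_mul
  | h_odd k =>
    rcases eq_or_ne k 0 with rfl | hk
    · rw [mul_zero, zero_add, sharkSegment_one]
      exact isIntervalPeriodSet_singleton_one
    · rw [sharkSegment_of_odd (odd_two_mul_add_one k) (by omega)]
      exact isIntervalPeriodSet_one_or_even_or_lt (2 * k)

/-- **Sharkovsky's Theorem (converse half).** For every `n ∈ ℕ ∪ {2^∞}` there is a
continuous map `f : [0,1] → [0,1]` whose set of periods of cycles is exactly `S(n)`. -/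
theorem sharkovsky_converse :
    (∀ n : ℕ, 0 < n → ∃ f : ℝ → ℝ, ContinuousOn f (Set.Icc (0 : ℝ) 1) ∧
      Set.MapsTo f (Set.Icc (0 : ℝ) 1) (Set.Icc (0 : ℝ) 1) ∧
      periodsOn f (Set.Icc (0 : ℝ) 1) = sharkSegment n) ∧
    (∃ f : ℝ → ℝ, ContinuousOn f (Set.Icc (0 : ℝ) 1) ∧
      Set.MapsTo f (Set.Icc (0 : ℝ) 1) (Set.Icc (0 : ℝ) 1) ∧
      periodsOn f (Set.Icc (0 : ℝ) 1) = {m : ℕ | ∃ k : ℕ, m = 2 ^ k}) := by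
  exact ⟨fun _ hn => isIntervalPeriodSet_sharkSegment hn.ne', isIntervalPeriodSet_two_pow⟩
end

section
/- Let I be a closed interval, let f : I → I be a continuous map, and let m, n be natural numbers with m <_s n in the Sharkovsky ordering. If f has a cycle of period n, then f has a cycle of period m. In other words, forcing among periods is a linear ordering given by the Sharkovsky ordering. -/
/-! The argument is Du's. Let `f` have a point of period at least three, and let `b` be the point of
its cycle whose image `a` is the least point of the cycle. By the intermediate value theorem there
are `a < v < z < b` with `f z = z` and `f v = b`. If `c` is the first fixed point of `f^[2]` in
`[v, z]`, then on `[v, c)` the map `f^[2]` moves points to the left and `f` takes values above `z`.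
Preimages of `v` under the iterates of `f^[2]` therefore accumulate at `c` from the left, and
a point of `[v, c)` whose `f^[2]`-orbit remains there for a prescribed time has no small odd period.
Locating periodic points among such points yields

* from an odd period `m > 1`, every larger odd period (when `m` is the least odd period above one);
* from an odd period `m > 1`, every even period, because some point between `a` and `v` is sent by
  `f^[2]` to `c`;
* from any period at least three, period two.

Passing to the iterates `f^[2 ^ k]` gives the whole ordering. -/

open Function Set

namespace Sharkovsky

section Crossing

variable {X Y : Type*} [TopologicalSpace X] [LinearOrder Y] [TopologicalSpace Y]
  [OrderClosedTopology Y] {F G : X → Y}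

lemma forall_lt_of_forall_ne {S : Set X} (hS : IsPreconnected S) (hF : ContinuousOn F S)
    (hG : ContinuousOn G S) (hne : ∀ t ∈ S, F t ≠ G t) {x : X} (hx : x ∈ S) (hlt : F x < G x) :
    ∀ t ∈ S, F t < G t := by
  intro t ht
  by_contra! hle
  obtain ⟨u, hu, heq⟩ := hS.intermediate_value₂ hx ht hF hG hlt.le hle
  exact hne u hu heq

variable [ConditionallyCompleteLinearOrder X] [OrderTopology X] [DenselyOrdered X] {p q : X}

lemma exists_last_crossing (hF : Continuous F) (hG : Continuous G) (hpq : p ≤ q)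
    (hp : G p ≤ F p) (hq : F q < G q) :
    ∃ y ∈ Ico p q, F y = G y ∧ ∀ t ∈ Ioc y q, F t < G t := by
  obtain ⟨x, hx, hxeq⟩ := isPreconnected_Icc.intermediate_value₂ (right_mem_Icc.2 hpq)
    (left_mem_Icc.2 hpq) hF.continuousOn hG.continuousOn hq.le hp
  obtain ⟨y, ⟨hy, hyeq⟩, hmax⟩ := (isCompact_Icc.inter_right (isClosed_eq hF hG)).exists_isGreatest
    ⟨x, hx, hxeq⟩
  have hyq : y < q := hy.2.lt_of_ne (by rintro rfl; exact hq.ne hyeq)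
  refine ⟨y, ⟨hy.1, hyq⟩, hyeq, forall_lt_of_forall_ne isPreconnected_Ioc hF.continuousOn
    hG.continuousOn (fun t ht heq => ?_) (right_mem_Ioc.2 hyq) hq⟩
  exact ht.1.not_ge (hmax ⟨⟨hy.1.trans ht.1.le, ht.2⟩, heq⟩)

lemma exists_first_crossing (hF : Continuous F) (hG : Continuous G) (hpq : p ≤ q)
    (hp : F p < G p) (hq : G q ≤ F q) :
    ∃ y ∈ Ioc p q, F y = G y ∧ ∀ t ∈ Ico p y, F t < G t := by
  obtain ⟨y, hy, heq, hlt⟩ := exists_last_crossing (X := Xᵒᵈ) (F := F ∘ OrderDual.ofDual)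
    (G := G ∘ OrderDual.ofDual) (p := OrderDual.toDual q) (q := OrderDual.toDual p) hF hG hpq hq hp
  exact ⟨y, hy.symm, heq, fun t ht => hlt t ht.symm⟩

end Crossing

section Period

variable {α : Type*} {f : α → α} {x : α}

lemma iterate_two_mul_add_one_apply (f : α → α) (n : ℕ) (x : α) :
    f^[2 * n + 1] x = f ((f^[2])^[n] x) := by
  rw [iterate_succ_apply', iterate_mul]

lemma lt_of_odd_of_isPeriodicPt {n N : ℕ} (hne : ∀ j ≤ n, f ((f^[2])^[j] x) ≠ x) (hN : Odd N)
    (hper : IsPeriodicPt f N x) : 2 * n + 1 < N := by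
  obtain ⟨r, rfl⟩ := hN
  by_contra! hle
  refine hne r (by lia) ?_
  rw [← iterate_two_mul_add_one_apply f]
  exact hper

lemma minimalPeriod_restrict {s : Set α} (hf : MapsTo f s s) (x : s) :
    minimalPeriod (hf.restrict f s s) x = minimalPeriod f x := by
  rw [minimalPeriod_eq_minimalPeriod_iff]
  intro n
  rw [IsPeriodicPt, IsPeriodicPt, IsFixedPt, IsFixedPt, ← hf.coe_iterate_restrict x n,
    Subtype.ext_iff]

lemma minimalPeriod_iterate_of_eq_mul {n q : ℕ} (hn : n ≠ 0) (hx : minimalPeriod f x = n * q) :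
    minimalPeriod f^[n] x = q := by
  rw [minimalPeriod_iterate_eq_div_gcd hn, hx, Nat.gcd_mul_right_left,
    Nat.mul_div_cancel_left q (Nat.pos_of_ne_zero hn)]

lemma exists_minimalPeriod_eq_prime_pow_mul {p k : ℕ} (hp : p.Prime) :
    ∃ i ≤ k, minimalPeriod f x = p ^ i * minimalPeriod f^[p ^ k] x ∧
      (p ∣ minimalPeriod f^[p ^ k] x → i = k) := by
  set N := minimalPeriod f x
  obtain ⟨i, hik, hgcd⟩ := (Nat.dvd_prime_pow hp).1 (Nat.gcd_dvd_right N (p ^ k))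
  have hN : N = p ^ i * minimalPeriod f^[p ^ k] x := by
    rw [minimalPeriod_iterate_eq_div_gcd (pow_ne_zero k hp.ne_zero), ← hgcd,
      Nat.mul_div_cancel' (Nat.gcd_dvd_left N (p ^ k))]
  refine ⟨i, hik, hN, fun hdvd => hik.eq_of_not_lt fun hlt => ?_⟩
  have hdvd_gcd : p ^ (i + 1) ∣ N.gcd (p ^ k) :=
    Nat.dvd_gcd (by rw [hN, pow_succ]; exact mul_dvd_mul_left _ hdvd) (pow_dvd_pow p hlt)
  rw [hgcd, Nat.pow_dvd_pow_iff_le_right hp.one_lt] at hdvd_gcd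
  lia

lemma minimalPeriod_eq_two_pow_mul {k q : ℕ} (hq : Even q) (hx : minimalPeriod f^[2 ^ k] x = q) :
    minimalPeriod f x = 2 ^ k * q := by
  obtain ⟨i, -, hN, hi⟩ := exists_minimalPeriod_eq_prime_pow_mul (f := f) (x := x) (k := k)
    Nat.prime_two
  rw [hN, hx, hi (hx ▸ hq.two_dvd)]

lemma exists_forall_apply_le_iterate [LinearOrder α] (hx : minimalPeriod f x ≠ 0) :
    ∃ b, minimalPeriod f b = minimalPeriod f x ∧ ∀ n, f b ≤ f^[n] b := by
  have hper : x ∈ periodicPts f := minimalPeriod_pos_iff_mem_periodicPts.1 (Nat.pos_of_ne_zero hx)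
  obtain ⟨i, -, hmin⟩ := Finset.exists_min_image (Finset.range (minimalPeriod f x))
    (fun i => f^[i + 1] x) (Finset.nonempty_range_iff.2 hx)
  refine ⟨f^[i] x, minimalPeriod_apply_iterate hper i, fun n => ?_⟩
  obtain ⟨k, hk⟩ : ∃ k, n + i + minimalPeriod f x = k + 1 :=
    Nat.exists_eq_add_one_of_ne_zero (by lia)
  calc f (f^[i] x) = f^[i + 1] x := (iterate_succ_apply' f i x).symm
    _ ≤ f^[k % minimalPeriod f x + 1] x :=
      hmin _ (Finset.mem_range.2 (Nat.mod_lt k (Nat.pos_of_ne_zero hx)))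
    _ = f^[k + 1] x := by
      rw [iterate_succ_apply', iterate_mod_minimalPeriod_eq, ← iterate_succ_apply' f]
    _ = f^[n] (f^[i] x) := by rw [← hk, iterate_add_minimalPeriod_eq, iterate_add_apply]

end Period

variable {α : Type*} [ConditionallyCompleteLinearOrder α] [TopologicalSpace α] [OrderTopology α]
  [DenselyOrdered α] {f g : α → α} {x d v c z : α}

theorem exists_minimalPeriod_eq_one (hf : Continuous f) (hx : minimalPeriod f x ≠ 0) :
    ∃ y, minimalPeriod f y = 1 := by
  obtain ⟨b, -, hmin⟩ := exists_forall_apply_le_iterate hx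
  obtain ⟨y, hy⟩ := intermediate_value_univ₂ hf continuous_id (hmin 0) (hmin 2)
  exact ⟨y, minimalPeriod_eq_one_iff_isFixedPt.2 hy⟩

/-! ### Maps moving an interval towards its left endpoint -/

lemma exists_iterate_eq_forall_mem_Ico (hg : Continuous g) (hvc : v < c) (hc : g c = c)
    (hlt : ∀ t ∈ Ico v c, g t < t) (n : ℕ) :
    ∃ s ∈ Ico v c, g^[n] s = v ∧ ∀ t ∈ Ico s c, ∀ j ≤ n, g^[j] t ∈ Ico v c := by
  induction n with
  | zero =>
    refine ⟨v, left_mem_Ico.2 hvc, rfl, fun t ht j hj => ?_⟩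
    rwa [Nat.le_zero.1 hj]
  | succ n ih =>
    obtain ⟨s, hs, hsv, hstay⟩ := ih
    obtain ⟨u, hu, hus, habove⟩ := exists_last_crossing continuous_const hg hs.2.le
      (hlt s hs).le (hs.2.trans_eq hc.symm)
    have hvu : v ≤ u := hs.1.trans hu.1
    refine ⟨u, ⟨hvu, hu.2⟩, by rw [iterate_succ_apply, ← hus, hsv], fun t ht j hj => ?_⟩
    have htI : t ∈ Ico v c := ⟨hvu.trans ht.1, ht.2⟩
    have hgt : g t ∈ Ico s c := by
      refine ⟨?_, (hlt t htI).trans ht.2⟩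
      rcases ht.1.eq_or_lt with rfl | hut
      · exact hus.le
      · exact (habove t ⟨hut, ht.2.le⟩).le
    cases j with
    | zero => exact htI
    | succ j => exact hstay (g t) hgt j (by lia)

lemma exists_iterate_succ_le_forall_mem_Ico (hg : Continuous g) (hdv : d < v) (hvc : v < c)
    (hd : g d = c) (hv : g v ≤ d) (hc : g c = c) (hlt : ∀ t ∈ Ico v c, g t < t)
    (hlt_c : ∀ t ∈ Ioc d v, g t < c) (n : ℕ) :
    ∃ w ∈ Ioc d v, g^[n + 1] w ≤ d ∧ ∀ t ∈ Ioc d w, ∀ j, 0 < j → j ≤ n → g^[j] t ∈ Ico v c := by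
  cases n with
  | zero => exact ⟨v, right_mem_Ioc.2 hdv, hv, fun t _ j hj hj' => by lia⟩
  | succ n =>
    obtain ⟨s, hs, hsv, hstay⟩ := exists_iterate_eq_forall_mem_Ico hg hvc hc hlt n
    obtain ⟨w, hw, hsw, habove⟩ := exists_first_crossing continuous_const hg hdv.le
      (hs.2.trans_eq hd.symm) (hv.trans (hdv.le.trans hs.1))
    refine ⟨w, hw, ?_, fun t ht j hj hjn => ?_⟩
    · rw [iterate_succ_apply, ← hsw, iterate_succ_apply', hsv]
      exact hv
    · have hgt : g t ∈ Ico s c := by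
        refine ⟨?_, hlt_c t ⟨ht.1, ht.2.trans hw.2⟩⟩
        rcases ht.2.eq_or_lt with rfl | htw
        · exact hsw.le
        · exact (habove t ⟨ht.1.le, htw⟩).le
      obtain ⟨j, rfl⟩ := Nat.exists_eq_add_one.2 hj
      exact hstay (g t) hgt j (by lia)

lemma exists_minimalPeriod_eq_forall_mem_Ico (hg : Continuous g) (hdv : d < v) (hvc : v < c)
    (hd : g d = c) (hv : g v ≤ d) (hc : g c = c) (hlt : ∀ t ∈ Ico v c, g t < t)
    (hlt_c : ∀ t ∈ Ioc d v, g t < c) {k : ℕ} (hk : k ≠ 0) :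
    ∃ y ∈ Ioo d v, minimalPeriod g y = k ∧ ∀ j, 0 < j → j < k → g^[j] y ∈ Ico v c := by
  obtain ⟨n, rfl⟩ := Nat.exists_eq_add_one_of_ne_zero hk
  obtain ⟨w, hw, hwd, hstay⟩ :=
    exists_iterate_succ_le_forall_mem_Ico hg hdv hvc hd hv hc hlt hlt_c n
  have hcd : g^[n + 1] d = c := by
    rw [iterate_succ_apply, hd]
    exact iterate_fixed hc n
  obtain ⟨y, hy, hyfix, -⟩ := exists_first_crossing continuous_id (hg.iterate (n + 1)) hw.1.le
    (show d < g^[n + 1] d by rw [hcd]; exact hdv.trans hvc) (hwd.trans hw.1.le)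
  have hyw : y < w := hy.2.lt_of_ne (by rintro rfl; exact (hwd.trans_lt hw.1).ne hyfix.symm)
  have hyv : y < v := hyw.trans_le hw.2
  have hyper : IsPeriodicPt g (n + 1) y := hyfix.symm
  have hreturn : ∀ j, 0 < j → j < n + 1 → g^[j] y ∈ Ico v c := fun j hj hjn =>
    hstay y hy j hj (by lia)
  refine ⟨y, ⟨hy.1, hyv⟩, ?_, hreturn⟩
  refine (hyper.minimalPeriod_le n.succ_pos).eq_of_not_lt fun hlt' => ?_
  have := (hreturn _ (hyper.minimalPeriod_pos n.succ_pos) hlt').1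
  rw [iterate_minimalPeriod] at this
  exact this.not_gt hyv

/-! ### Du's configuration -/

/-- The points `v < c ≤ z` around which Du's proof of Sharkovsky's theorem is organised: `f v` lies
on a cycle whose least point is `f^[2] v`, `z` is a fixed point of `f` separating `v` from `f v`,
and `c` is the first fixed point of `f^[2]` to the right of `v`. Only the inequalities between
`f^[2] v` and its cycle are recorded; that `f v` is periodic is a separate hypothesis. -/
structure IsDuTriple {α : Type*} [Preorder α] (f : α → α) (v c z : α) : Prop where
  lt : v < c
  le : c ≤ z
  apply_right : f z = z
  lt_apply_left : z < f v
  iterate_two_mid : f^[2] c = c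
  iterate_two_lt : ∀ t ∈ Ico v c, f^[2] t < t
  le_iterate : ∀ n, f^[2] v ≤ f^[n] (f v)

lemma exists_isDuTriple (hf : Continuous f) (hx : 3 ≤ minimalPeriod f x) :
    ∃ v c z, IsDuTriple f v c z ∧ IsPeriodicPt f (minimalPeriod f x) (f v) := by
  obtain ⟨b, hb, hmin⟩ := exists_forall_apply_le_iterate (f := f) (x := x) (by lia)
  have hper : IsPeriodicPt f (minimalPeriod f x) b := hb ▸ isPeriodicPt_minimalPeriod f b
  have hlt : f b < b := (hmin 0).lt_of_ne fun hfix => by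
    have := minimalPeriod_eq_one_iff_isFixedPt.2 hfix
    lia
  obtain ⟨p, hp, hbp⟩ : ∃ p ∈ Ico (f b) b, b ≤ f p := by
    by_contra! hbelow
    have hstay : ∀ n, f^[n + 1] b < b := by
      intro n
      induction n with
      | zero => exact hlt
      | succ n ih => rw [iterate_succ_apply']; exact hbelow _ ⟨hmin (n + 1), ih⟩
    have := hstay (minimalPeriod f x - 1)
    rw [Nat.sub_add_cancel (by lia), hper.eq] at this
    exact this.false
  obtain ⟨z, hz, hzfix, -⟩ := exists_last_crossing hf continuous_id hp.2.le (hp.2.le.trans hbp) hlt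
  obtain ⟨v, hv, hvb, -⟩ := exists_last_crossing hf continuous_const hz.1 hbp (hzfix.trans_lt hz.2)
  subst hvb
  have hltv : f^[2] v < v := (hp.1.trans hv.1).lt_of_ne fun hfix => by
    have hper_two : IsPeriodicPt f 2 (f v) := IsPeriodicPt.apply_iterate (n := 2) hfix 1
    have := hper_two.minimalPeriod_le two_pos
    lia
  have hzfix_two : f^[2] z = z := iterate_fixed hzfix 2
  obtain ⟨c, hc, hcfix, hleft⟩ := exists_first_crossing (hf.iterate 2) continuous_id hv.2.le hltv
    hzfix_two.ge
  exact ⟨v, c, z, ⟨hc.1, hc.2, hzfix, hz.2, hcfix, hleft, hmin⟩, hper⟩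

namespace IsDuTriple

section Order

variable {α : Type*} [LinearOrder α] {f : α → α} {v c z : α}

lemma left_lt_right (h : IsDuTriple f v c z) : v < z := h.lt.trans_le h.le

lemma iterate_two_left_lt (h : IsDuTriple f v c z) : f^[2] v < v :=
  h.iterate_two_lt v (left_mem_Ico.2 h.lt)

lemma exists_le_iterate_two (h : IsDuTriple f v c z) {m : ℕ} (hm : Odd m)
    (hper : IsPeriodicPt f m (f v)) : ∃ q ∈ Icc (f^[2] v) v, c ≤ f^[2] q := by
  by_contra! hbelow
  have hstay : ∀ n, (f^[2])^[n] (f^[2] v) < c := by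
    intro n
    induction n with
    | zero => exact h.iterate_two_left_lt.trans h.lt
    | succ n ih =>
      have hmin : f^[2] v ≤ (f^[2])^[n] (f^[2] v) := by
        rw [← iterate_mul]
        exact h.le_iterate (2 * n + 1)
      rw [iterate_succ_apply']
      rcases le_total ((f^[2])^[n] (f^[2] v)) v with hle | hle
      · exact hbelow _ ⟨hmin, hle⟩
      · exact (h.iterate_two_lt _ ⟨hle, ih⟩).trans ih
  obtain ⟨r, rfl⟩ := hm
  have hreturn : (f^[2])^[r] (f^[2] v) = f v := by
    rw [← iterate_mul]
    exact hper
  exact (hstay r).not_ge (hreturn ▸ h.le.trans h.lt_apply_left.le)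

lemma lt_apply_of_forall_iterate_two_lt [TopologicalSpace α] [OrderClosedTopology α]
    (h : IsDuTriple f v c z) (hf : Continuous f) {S : Set α} (hS : IsPreconnected S) (hv : v ∈ S)
    (hlt : ∀ t ∈ S, f^[2] t < z) : ∀ t ∈ S, z < f t := by
  refine forall_lt_of_forall_ne hS continuousOn_const hf.continuousOn (fun t ht heq => ?_) hv
    h.lt_apply_left
  have := hlt t ht
  rw [iterate_succ_apply, iterate_one, ← heq, h.apply_right] at this
  exact this.false

end Order

lemma lt_apply (h : IsDuTriple f v c z) (hf : Continuous f) : ∀ t ∈ Ico v c, z < f t :=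
  h.lt_apply_of_forall_iterate_two_lt hf isPreconnected_Ico (left_mem_Ico.2 h.lt) fun t ht =>
    (h.iterate_two_lt t ht).trans (ht.2.trans_le h.le)

lemma exists_isPeriodicPt_forall_mem_Ico (h : IsDuTriple f v c z) (hf : Continuous f) {r : ℕ}
    (hper : IsPeriodicPt f (2 * r + 1) (f v)) (i : ℕ) :
    ∃ t ∈ Ico v c, IsPeriodicPt f (2 * (r + 1 + i) + 1) t ∧
      ∀ j ≤ i, (f^[2])^[j] t ∈ Ico v c := by
  have hg := hf.iterate 2
  obtain ⟨s, hs, hsv, hstay⟩ :=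
    exists_iterate_eq_forall_mem_Ico hg h.lt h.iterate_two_mid h.iterate_two_lt i
  obtain ⟨u, hu, huv, -⟩ :=
    exists_iterate_eq_forall_mem_Ico hg h.lt h.iterate_two_mid h.iterate_two_lt (r + 1)
  obtain ⟨w, hw, huw, -⟩ := exists_last_crossing continuous_const (hg.iterate i) hs.2.le
    (hsv.trans_le hu.1) (hu.2.trans_eq (iterate_fixed h.iterate_two_mid i).symm)
  have hsplit (t : α) : f^[2 * (r + 1 + i) + 1] t = f ((f^[2])^[r + 1] ((f^[2])^[i] t)) := by
    rw [iterate_two_mul_add_one_apply, iterate_add_apply]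
  have hleft : f^[2 * (r + 1 + i) + 1] s < s := by
    have hv : f ((f^[2])^[r + 1] v) = f^[2] v := by
      rw [← iterate_two_mul_add_one_apply f, iterate_succ_apply, mul_add_one,
        iterate_succ_apply' f (2 * r + 1), hper.eq]
      rfl
    rw [hsplit, hsv, hv]
    exact h.iterate_two_left_lt.trans_le hs.1
  have hright : w ≤ f^[2 * (r + 1 + i) + 1] w := by
    rw [hsplit, ← huw, huv]
    exact hw.2.le.trans (h.le.trans h.lt_apply_left.le)
  obtain ⟨t, ht, htfix, -⟩ := exists_first_crossing (hf.iterate _) continuous_id hw.1 hleft hright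
  have htI : t ∈ Ico s c := ⟨ht.1.le, ht.2.trans_lt hw.2⟩
  exact ⟨t, ⟨hs.1.trans htI.1, htI.2⟩, htfix, hstay t htI⟩

lemma exists_minimalPeriod_iterate_two_eq (h : IsDuTriple f v c z) (hf : Continuous f) {m k : ℕ}
    (hm : Odd m) (hper : IsPeriodicPt f m (f v)) (hk : k ≠ 0) :
    ∃ y, minimalPeriod f^[2] y = k ∧ y < z ∧ ∀ j < k, z < f ((f^[2])^[j] y) := by
  have hg := hf.iterate 2
  obtain ⟨q, hq, hcq⟩ := h.exists_le_iterate_two hm hper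
  obtain ⟨d, hd, hdc, hbelow⟩ := exists_last_crossing hg continuous_const hq.2 hcq
    (h.iterate_two_left_lt.trans h.lt)
  obtain ⟨y, hy, hyk, hreturn⟩ := exists_minimalPeriod_eq_forall_mem_Ico hg hd.2 h.lt hdc
    (hq.1.trans hd.1) h.iterate_two_mid h.iterate_two_lt hbelow hk
  refine ⟨y, hyk, hy.2.trans h.left_lt_right, fun j hj => ?_⟩
  rcases Nat.eq_zero_or_pos j with rfl | hj_pos
  · exact h.lt_apply_of_forall_iterate_two_lt hf isPreconnected_Ioc (right_mem_Ioc.2 hd.2)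
      (fun t ht => (hbelow t ht).trans_le h.le) y ⟨hy.1, hy.2.le⟩
  · exact h.lt_apply hf _ (hreturn j hj_pos hj)

end IsDuTriple

theorem exists_minimalPeriod_eq_two (hf : Continuous f) (hx : 3 ≤ minimalPeriod f x) :
    ∃ y, minimalPeriod f y = 2 := by
  obtain ⟨v, c, z, h, -⟩ := exists_isDuTriple hf hx
  obtain ⟨y, hy, hyfix, hlt⟩ := exists_last_crossing (hf.iterate 2) continuous_id
    h.iterate_two_left_lt.le (h.le_iterate 3) h.iterate_two_left_lt
  have hyz : y < z := hy.2.trans h.left_lt_right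
  have hzy : z < f y := by
    refine h.lt_apply_of_forall_iterate_two_lt hf isPreconnected_Icc (right_mem_Icc.2 hy.2.le)
      (fun t ht => ?_) y (left_mem_Icc.2 hy.2.le)
    rcases ht.1.eq_or_lt with rfl | hyt
    · exact hyfix.trans_lt hyz
    · exact (hlt t ⟨hyt, ht.2⟩).trans (ht.2.trans_lt h.left_lt_right)
  exact ⟨y, minimalPeriod_eq_prime hyfix (hyz.trans hzy).ne'⟩

theorem exists_minimalPeriod_eq_even (hf : Continuous f) (hodd : Odd (minimalPeriod f x))
    (hone : minimalPeriod f x ≠ 1) {k : ℕ} (hk : k ≠ 0) : ∃ y, minimalPeriod f y = 2 * k := by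
  obtain ⟨v, c, z, h, hper⟩ := exists_isDuTriple (x := x) hf (by grind)
  obtain ⟨y, hyk, hyz, habove⟩ := h.exists_minimalPeriod_iterate_two_eq hf hodd hper hk
  obtain ⟨i, hi, hy, heven⟩ := exists_minimalPeriod_eq_prime_pow_mul (f := f) (x := y) (k := 1)
    Nat.prime_two
  rw [pow_one, hyk] at hy heven
  refine ⟨y, ?_⟩
  rcases Nat.le_one_iff_eq_zero_or_eq_one.1 hi with rfl | rfl
  · rw [pow_zero, one_mul] at hy
    have hk_odd : Odd k := Nat.not_even_iff_odd.1 fun hk_even => zero_ne_one (heven hk_even.two_dvd)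
    have := lt_of_odd_of_isPeriodicPt (n := k - 1)
      (fun j hj => (hyz.trans (habove j (by lia))).ne') hk_odd (hy ▸ isPeriodicPt_minimalPeriod f y)
    lia
  · exact hy

theorem exists_minimalPeriod_eq_odd (hf : Continuous f) {m p : ℕ} (hm : Odd m) (hone : m ≠ 1)
    (hx : ∃ x, minimalPeriod f x = m) (hp : Odd p) (hmp : m < p) :
    ∃ y, minimalPeriod f y = p := by
  induction m using Nat.strong_induction_on with
  | _ m ih =>
    obtain ⟨x, rfl⟩ := hx
    obtain ⟨v, c, z, h, hper⟩ := exists_isDuTriple (x := x) hf (by grind)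
    obtain ⟨r, hr⟩ := hm
    obtain ⟨i, rfl⟩ : ∃ i, p = 2 * (r + 1 + i) + 1 := by
      obtain ⟨q, rfl⟩ := hp
      exact ⟨q - (r + 1), by lia⟩
    obtain ⟨t, ht, htper, hstay⟩ := h.exists_isPeriodicPt_forall_mem_Ico hf (hr ▸ hper) i
    have hdvd : minimalPeriod f t ∣ 2 * (r + 1 + i) + 1 := htper.minimalPeriod_dvd
    have htodd : Odd (minimalPeriod f t) := Odd.of_dvd_nat hp hdvd
    have hlarge : 2 * i + 1 < minimalPeriod f t := by
      refine lt_of_odd_of_isPeriodicPt (fun j hj => ?_) htodd (isPeriodicPt_minimalPeriod f t)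
      exact (ht.2.trans (h.le.trans_lt (h.lt_apply hf _ (hstay j hj)))).ne'
    rcases eq_or_ne (minimalPeriod f t) (2 * (r + 1 + i) + 1) with heq | hne
    · exact ⟨t, heq⟩
    · -- A proper divisor of `p` that exceeds `p - m - 1` is smaller than `m`.
      have hhalf : 2 * minimalPeriod f t ≤ 2 * (r + 1 + i) + 1 := by
        obtain ⟨e, he⟩ := hdvd
        have he_two : 2 ≤ e := by
          rcases e with _ | _ | e <;> lia
        rw [he, mul_comm]
        exact Nat.mul_le_mul_left _ he_two
      exact ih (minimalPeriod f t) (by lia) htodd (by lia) ⟨t, rfl⟩ (by lia)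

/-! ### Dyadic multiples -/

theorem exists_minimalPeriod_eq_two_pow (hf : Continuous f) {k q : ℕ}
    (hx : minimalPeriod f x = 2 ^ k * q) (hq : 1 < q) : ∃ y, minimalPeriod f y = 2 ^ k := by
  cases k with
  | zero => exact exists_minimalPeriod_eq_one hf (x := x) (by lia)
  | succ k =>
    have hperiod : minimalPeriod f^[2 ^ k] x = 2 * q :=
      minimalPeriod_iterate_of_eq_mul (by positivity) (by rw [hx, pow_succ, mul_assoc])
    obtain ⟨y, hy⟩ := exists_minimalPeriod_eq_two (x := x) (hf.iterate (2 ^ k)) (by lia)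
    exact ⟨y, minimalPeriod_eq_two_pow_mul even_two hy⟩

theorem exists_minimalPeriod_eq_two_pow_mul_of_lt (hf : Continuous f) {k l q r : ℕ}
    (hx : minimalPeriod f x = 2 ^ k * q) (hq : Odd q) (hone : q ≠ 1) (hkl : k < l) (hr : r ≠ 0) :
    ∃ y, minimalPeriod f y = 2 ^ l * r := by
  obtain ⟨i, rfl⟩ := Nat.exists_eq_add_of_lt hkl
  have hperiod := minimalPeriod_iterate_of_eq_mul (by positivity) hx
  obtain ⟨y, hy⟩ := exists_minimalPeriod_eq_even (x := x) (k := 2 ^ i * r) (hf.iterate (2 ^ k))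
    (hperiod ▸ hq) (hperiod ▸ hone) (by positivity)
  exact ⟨y, by rw [minimalPeriod_eq_two_pow_mul (even_two_mul _) hy]; ring⟩

theorem exists_minimalPeriod_eq_two_pow_mul_odd (hf : Continuous f) {k q r : ℕ}
    (hx : minimalPeriod f x = 2 ^ k * q) (hq : Odd q) (hone : q ≠ 1) (hr : Odd r) (hqr : q < r) :
    ∃ y, minimalPeriod f y = 2 ^ k * r := by
  obtain ⟨y, hy⟩ := exists_minimalPeriod_eq_odd (hf.iterate (2 ^ k)) hq hone
    ⟨x, minimalPeriod_iterate_of_eq_mul (by positivity) hx⟩ hr hqr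
  obtain ⟨i, hik, hyi, -⟩ := exists_minimalPeriod_eq_prime_pow_mul (f := f) (x := y) (k := k)
    Nat.prime_two
  rw [hy] at hyi
  rcases hik.eq_or_lt with rfl | hlt
  · exact ⟨y, hyi⟩
  · exact exists_minimalPeriod_eq_two_pow_mul_of_lt hf hyi hr (by grind) hlt hr.pos.ne'

lemma two_pow_mul_oddPart (n : ℕ) : 2 ^ n.factorization 2 * oddPart n = n :=
  Nat.ordProj_mul_ordCompl_eq_self n 2

lemma odd_oddPart {n : ℕ} (hn : n ≠ 0) : Odd (oddPart n) :=
  Nat.odd_iff.2 (Nat.two_dvd_ne_zero.1 (Nat.not_dvd_ordCompl Nat.prime_two hn))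

lemma ne_zero_of_sharkLt {m n : ℕ} (h : SharkLt m n) : m ≠ 0 := by
  rintro rfl
  simp [SharkLt, oddPart] at h

theorem exists_minimalPeriod_eq_of_sharkLt (hf : Continuous f) {m n : ℕ} (hn : n ≠ 0)
    (hmn : SharkLt m n) (hx : minimalPeriod f x = n) : ∃ y, minimalPeriod f y = m := by
  have hm_odd := odd_oddPart (ne_zero_of_sharkLt hmn)
  have hn_odd := odd_oddPart hn
  have hm_eq := two_pow_mul_oddPart m
  have hn_eq := two_pow_mul_oddPart n
  unfold SharkLt at hmn
  generalize m.factorization 2 = l, n.factorization 2 = k, oddPart m = r, oddPart n = q at *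
  subst hm_eq hn_eq
  rcases hmn with ⟨rfl, rfl, hlt⟩ | ⟨rfl, hn_one⟩ | ⟨-, hn_one, hlt | ⟨rfl, hlt⟩⟩
  · rw [mul_one, mul_one, Nat.pow_lt_pow_iff_right one_lt_two] at hlt
    obtain ⟨i, rfl⟩ := Nat.exists_eq_add_of_lt hlt
    rw [mul_one]
    exact exists_minimalPeriod_eq_two_pow (q := 2 ^ (i + 1)) hf (by rw [hx]; ring)
      (Nat.one_lt_two_pow i.succ_ne_zero)
  · rcases le_or_gt l k with hlk | hkl
    · obtain ⟨i, rfl⟩ := Nat.exists_eq_add_of_le hlk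
      rw [mul_one]
      exact exists_minimalPeriod_eq_two_pow (q := 2 ^ i * q) hf (by rw [hx]; ring)
        (one_lt_mul_of_le_of_lt Nat.one_le_two_pow (lt_of_le_of_ne hn_odd.pos hn_one.symm))
    · exact exists_minimalPeriod_eq_two_pow_mul_of_lt hf hx hn_odd hn_one hkl one_ne_zero
  · exact exists_minimalPeriod_eq_two_pow_mul_of_lt hf hx hn_odd hn_one hlt hm_odd.pos.ne'
  · exact exists_minimalPeriod_eq_two_pow_mul_odd hf hx hn_odd hn_one hm_odd hlt

end Sharkovsky

theorem sharkovsky_forcing_general {α : Type*} [ConditionallyCompleteLinearOrder α]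
    [TopologicalSpace α] [OrderTopology α] [DenselyOrdered α] {s : Set α} [s.OrdConnected]
    {f : α → α} (hf : ContinuousOn f s) (hs : Set.MapsTo f s s) {m n : ℕ} (hn : n ≠ 0)
    (hmn : SharkLt m n) (hcycle : ∃ x ∈ s, Function.minimalPeriod f x = n) :
    ∃ y ∈ s, Function.minimalPeriod f y = m := by
  obtain ⟨x, hxs, hx⟩ := hcycle
  let _ : Inhabited s := ⟨⟨x, hxs⟩⟩
  obtain ⟨y, hy⟩ := Sharkovsky.exists_minimalPeriod_eq_of_sharkLt (hf.mapsToRestrict hs) hn hmn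
    ((Sharkovsky.minimalPeriod_restrict hs ⟨x, hxs⟩).trans hx)
  exact ⟨y, y.2, (Sharkovsky.minimalPeriod_restrict hs y).symm.trans hy⟩

/-- **Forcing among periods is the Sharkovsky ordering.** If `m <ₛ n` and a continuous
self-map of a closed interval has a cycle of period `n`, then it has a cycle of period `m`. -/
theorem sharkovsky_forcing (a b : ℝ) (hab : a ≤ b) (f : ℝ → ℝ)
    (hf : ContinuousOn f (Set.Icc a b))
    (hmaps : Set.MapsTo f (Set.Icc a b) (Set.Icc a b))
    (m n : ℕ) (hm : 0 < m) (hn : 0 < n) (hmn : SharkLt m n)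
    (hcycle : ∃ x ∈ Set.Icc a b, Function.minimalPeriod f x = n) :
    ∃ y ∈ Set.Icc a b, Function.minimalPeriod f y = m := by
  exact sharkovsky_forcing_general hf hmaps hn.ne' hmn hcycle
end

section
/- Forcing among patterns of interval cycles is a partial ordering. In particular it is antisymmetric: if θ is a cyclic permutation of {1, …, n} and η is a cyclic permutation of {1, …, m}, θ forces η, and η forces θ, then n = m and θ = η. -/
/-- A permutation of `Fin n` is cyclic if it acts transitively. -/
def IsCyclicPerm {n : ℕ} (θ : Equiv.Perm (Fin n)) : Prop :=
  ∀ i j : Fin n, ∃ k : ℕ, (θ ^ k) i = j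

/-- `f` exhibits the pattern `θ` on `I` if it has points `p 0 < p 1 < ⋯ < p (n-1)` in `I`
with `f (p i) = p (θ i)` for all `i`. -/
def ExhibitsOn (f : ℝ → ℝ) (I : Set ℝ) {n : ℕ} (θ : Equiv.Perm (Fin n)) : Prop :=
  ∃ p : Fin n → ℝ, StrictMono p ∧ (∀ i, p i ∈ I) ∧ ∀ i, f (p i) = p (θ i)

/-- The pattern `θ` forces the pattern `η` if every continuous map of a closed interval
into itself exhibiting `θ` also exhibits `η`. -/
def PatternForces {n m : ℕ} (θ : Equiv.Perm (Fin n)) (η : Equiv.Perm (Fin m)) : Prop :=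
  ∀ a b : ℝ, a ≤ b → ∀ f : ℝ → ℝ, ContinuousOn f (Set.Icc a b) →
    Set.MapsTo f (Set.Icc a b) (Set.Icc a b) →
    ExhibitsOn f (Set.Icc a b) θ → ExhibitsOn f (Set.Icc a b) η

/-!
A polynomial of degree at least two has only finitely many periodic points of each period, so among
its cycles with a given pattern there is one with the shortest convex hull. If distinct cyclic
patterns `θ` and `η` forced each other, then, applying forcing to such a polynomial truncated to the
hull of a cycle with pattern `θ`, one would get a cycle with pattern `η` strictly inside that hull
and, in the same way, a cycle with pattern `θ` strictly inside the hull of the latter. A polynomial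
with a cycle of pattern `θ` exists by interpolation.
-/

open Function Polynomial Set

/-- A set of points `p 0 < p 1 < ⋯` which `f` permutes in the way prescribed by `θ`, given by its
increasing enumeration `p`. When `θ` is cyclic this is a cycle of `f` with pattern `θ`. -/
structure IsCycleWithPattern {α : Type*} [Preorder α] (f : α → α) {n : ℕ}
    (θ : Equiv.Perm (Fin n)) (p : Fin n → α) : Prop where
  strictMono : StrictMono p
  semiconj : Semiconj p θ f

theorem IsCyclicPerm.range_eq_range_iterate {α : Type*} {n : ℕ} {θ : Equiv.Perm (Fin n)}
    (hθ : IsCyclicPerm θ) {f : α → α} {p : Fin n → α} (hp : Semiconj p θ f) (i : Fin n) :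
    range p = range fun k ↦ f^[k] (p i) := by
  have p_pow (k : ℕ) : p ((θ ^ k) i) = f^[k] (p i) := by
    rw [← Equiv.Perm.iterate_eq_pow, (hp.iterate_right k).eq]
  refine Subset.antisymm (range_subset_iff.2 fun j ↦ ?_)
    (range_subset_iff.2 fun k ↦ ⟨(θ ^ k) i, p_pow k⟩)
  obtain ⟨k, rfl⟩ := hθ i j
  exact ⟨k, (p_pow k).symm⟩

theorem coe_projIcc_eq_self_of_mem_Ioo {α : Type*} [LinearOrder α] {a b x : α} (hab : a ≤ b)
    (hx : (projIcc a b hab x : α) ∈ Ioo a b) : (projIcc a b hab x : α) = x := by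
  have hax : a ≤ x := le_of_not_ge fun h ↦ by simp [projIcc_of_le_left hab h] at hx
  have hxb : x ≤ b := le_of_not_ge fun h ↦ by simp [projIcc_of_right_le hab h] at hx
  rw [projIcc_of_mem hab ⟨hax, hxb⟩]

namespace IsCycleWithPattern

variable {α : Type*} {f : α → α} {n m : ℕ} {θ : Equiv.Perm (Fin n)} {η : Equiv.Perm (Fin m)}
  {p : Fin n → α} {q : Fin m → α}

theorem eq_and_heq_of_range_eq [Preorder α] (hp : IsCycleWithPattern f θ p)
    (hq : IsCycleWithPattern f η q) (hpq : range p = range q) : n = m ∧ HEq θ η := by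
  obtain rfl : n = m := by
    simpa [ncard_range_of_injective, hp.strictMono.injective, hq.strictMono.injective]
      using congrArg ncard hpq
  obtain rfl : p = q := (hp.strictMono.range_inj hq.strictMono).1 hpq
  refine ⟨rfl, heq_of_eq (Equiv.ext fun i ↦ hp.strictMono.injective ?_)⟩
  rw [hp.semiconj.eq, hq.semiconj.eq]

theorem eq_and_heq_of_apply_eq [Preorder α] (hp : IsCycleWithPattern f θ p)
    (hq : IsCycleWithPattern f η q) (hθ : IsCyclicPerm θ) (hη : IsCyclicPerm η)
    {i : Fin n} {j : Fin m} (hij : p i = q j) : n = m ∧ HEq θ η :=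
  hp.eq_and_heq_of_range_eq hq <| by
    rw [hθ.range_eq_range_iterate hp.semiconj i, hη.range_eq_range_iterate hq.semiconj j, hij]

theorem projIcc_comp [LinearOrder α] (hp : IsCycleWithPattern f θ p) {a b : α} (hab : a ≤ b)
    (hpI : ∀ i, p i ∈ Icc a b) :
    IsCycleWithPattern (fun x ↦ (projIcc a b hab (f x) : α)) θ p where
  strictMono := hp.strictMono
  semiconj i := by
    beta_reduce
    rw [← hp.semiconj.eq, projIcc_of_mem hab (hpI _)]

theorem of_projIcc_comp [LinearOrder α] {a b : α} {hab : a ≤ b}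
    (hp : IsCycleWithPattern (fun x ↦ (projIcc a b hab (f x) : α)) θ p)
    (hpI : ∀ i, p i ∈ Ioo a b) : IsCycleWithPattern f θ p where
  strictMono := hp.strictMono
  semiconj i := by
    rw [hp.semiconj.eq]
    exact coe_projIcc_eq_self_of_mem_Ioo hab (hp.semiconj.eq i ▸ hpI (θ i))

end IsCycleWithPattern

-- The forced cycle of the truncation of `f` to the hull of `p` avoids the endpoints, since sharing
-- a point with `p` would give it the pattern `θ`; hence it is a cycle of `f` itself.
theorem PatternForces.exists_isCycleWithPattern_mem_Ioo {n m : ℕ} {θ : Equiv.Perm (Fin (n + 1))}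
    {η : Equiv.Perm (Fin m)} (hforce : PatternForces θ η) (hθ : IsCyclicPerm θ)
    (hη : IsCyclicPerm η) (hne : ¬(n + 1 = m ∧ HEq θ η)) {f : ℝ → ℝ} {p : Fin (n + 1) → ℝ}
    (hf : ContinuousOn f (Icc (p 0) (p (Fin.last n)))) (hp : IsCycleWithPattern f θ p) :
    ∃ q, IsCycleWithPattern f η q ∧ ∀ j, q j ∈ Ioo (p 0) (p (Fin.last n)) := by
  have hpI (i : Fin (n + 1)) : p i ∈ Icc (p 0) (p (Fin.last n)) :=
    ⟨hp.strictMono.monotone (Fin.zero_le i), hp.strictMono.monotone (Fin.le_last i)⟩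
  have hab : p 0 ≤ p (Fin.last n) := (hpI 0).2
  let g (x : ℝ) : ℝ := projIcc _ _ hab (f x)
  have hgp : IsCycleWithPattern g θ p := hp.projIcc_comp hab hpI
  have hg : ContinuousOn g (Icc (p 0) (p (Fin.last n))) :=
    (continuous_subtype_val.comp continuous_projIcc).comp_continuousOn hf
  obtain ⟨q, hq, hqI, hgq⟩ := hforce _ _ hab g hg (fun x _ ↦ (projIcc _ _ hab (f x)).2)
    ⟨p, hp.strictMono, hpI, fun i ↦ (hgp.semiconj i).symm⟩
  have hgq : IsCycleWithPattern g η q := ⟨hq, fun j ↦ (hgq j).symm⟩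
  have hpq (i : Fin (n + 1)) (j : Fin m) : p i ≠ q j :=
    fun h ↦ hne (hgp.eq_and_heq_of_apply_eq hgq hθ hη h)
  have hqIoo (j : Fin m) : q j ∈ Ioo (p 0) (p (Fin.last n)) :=
    ⟨(hqI j).1.lt_of_ne (hpq 0 j), (hqI j).2.lt_of_ne (hpq (Fin.last n) j).symm⟩
  exact ⟨q, hgq.of_projIcc_comp hqIoo, hqIoo⟩

theorem finite_setOf_isPeriodicPt_eval {R : Type*} [CommRing R] [IsDomain R] {P : R[X]}
    (hP : 1 < P.natDegree) {k : ℕ} (hk : k ≠ 0) :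
    {x | IsPeriodicPt (fun x ↦ P.eval x) k x}.Finite := by
  have hne : P.comp^[k] X - X ≠ 0 := fun h ↦ by
    have hdeg := congrArg natDegree (sub_eq_zero.1 h)
    rw [natDegree_iterate_comp, natDegree_X, mul_one] at hdeg
    exact (one_lt_pow₀ hP hk).ne' hdeg
  refine (finite_setOfPred_isRoot hne).subset fun x hx ↦ ?_
  simpa [IsRoot, iterate_comp_eval, sub_eq_zero] using hx.eq

theorem finite_setOf_semiconj_eval {R ι : Type*} [CommRing R] [IsDomain R] [Finite ι] {P : R[X]}
    (hP : 1 < P.natDegree) (σ : Equiv.Perm ι) :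
    {p : ι → R | Semiconj p σ fun x ↦ P.eval x}.Finite := by
  refine (Finite.pi' fun _ ↦ finite_setOf_isPeriodicPt_eval hP (orderOf_pos σ).ne').subset
    fun p hp i ↦ IsPeriodicPt.map (x := i) ?_ hp
  rw [IsPeriodicPt, Equiv.Perm.iterate_eq_pow, pow_orderOf_eq_one]
  exact isFixedPt_id i

-- Adding `nodal s v * X ^ (d + 1)` to the Lagrange interpolant raises its degree without changing
-- its values at the nodes.
theorem exists_lt_natDegree_and_eval_eq {F ι : Type*} [Field F] {s : Finset ι} {v : ι → F}
    (hv : InjOn v s) (r : ι → F) (d : ℕ) :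
    ∃ P : F[X], d < P.natDegree ∧ ∀ i ∈ s, P.eval (v i) = r i := by
  classical
  have hdeg : (Lagrange.nodal s v * X ^ (d + 1)).degree = ((s.card + (d + 1) : ℕ) : WithBot ℕ) := by
    simp [Lagrange.degree_nodal]
  refine ⟨Lagrange.interpolate s v r + Lagrange.nodal s v * X ^ (d + 1), ?_, fun i hi ↦ ?_⟩
  · rw [natDegree_add_eq_right_of_degree_lt, natDegree_eq_of_degree_eq_some hdeg]
    · lia
    · rw [hdeg]
      exact (Lagrange.degree_interpolate_lt r hv).trans_le (mod_cast Nat.le_add_right _ _)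
  · rw [eval_add, Lagrange.eval_interpolate_at_node r hv hi, eval_mul,
      Lagrange.eval_nodal_at_node hi, zero_mul, add_zero]

/-- **Forcing among patterns is a partial ordering**: it is antisymmetric on cyclic
permutations (patterns of cycles). -/
theorem patternForces_antisymm {n m : ℕ} (hn : 0 < n) (hm : 0 < m)
    (θ : Equiv.Perm (Fin n)) (η : Equiv.Perm (Fin m))
    (hθ : IsCyclicPerm θ) (hη : IsCyclicPerm η)
    (hforce₁ : PatternForces θ η) (hforce₂ : PatternForces η θ) :
    n = m ∧ HEq θ η := by
  by_contra hne
  obtain ⟨n, rfl⟩ := Nat.exists_eq_add_one.2 hn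
  obtain ⟨m, rfl⟩ := Nat.exists_eq_add_one.2 hm
  have hv : StrictMono fun i : Fin (n + 1) ↦ ((i : ℕ) : ℝ) :=
    Nat.strictMono_cast.comp Fin.val_strictMono
  obtain ⟨P, hdeg, hP⟩ := exists_lt_natDegree_and_eval_eq (s := Finset.univ)
    hv.injective.injOn (fun i ↦ ((θ i : ℕ) : ℝ)) 1
  have hfin : {p | IsCycleWithPattern (fun x ↦ P.eval x) θ p}.Finite :=
    (finite_setOf_semiconj_eval hdeg θ).subset fun _ hp ↦ hp.semiconj
  obtain ⟨p, hp, hmin⟩ := exists_min_image _ (fun p ↦ p (Fin.last n) - p 0) hfin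
    ⟨_, hv, fun i ↦ (hP i (Finset.mem_univ i)).symm⟩
  obtain ⟨q, hq, hqp⟩ :=
    hforce₁.exists_isCycleWithPattern_mem_Ioo hθ hη hne P.continuousOn hp
  obtain ⟨r, hr, hrq⟩ := hforce₂.exists_isCycleWithPattern_mem_Ioo hη hθ
    (fun h ↦ hne ⟨h.1.symm, h.2.symm⟩) P.continuousOn hq
  have hlt : r (Fin.last n) - r 0 < p (Fin.last n) - p 0 :=
    sub_lt_sub ((hrq _).2.trans (hqp _).2) ((hqp _).1.trans (hrq _).1)
  exact (hmin r hr).not_gt hlt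
end

section
/- Let I be a closed interval, let f : I → I be continuous, and let P be a cycle of f of period q ≥ 2. Then the over-rotation number p/q of P satisfies 0 < p/q ≤ 1/2. -/
open Function

/-- The number of sign changes of `f y - y` as `y` runs along the cyclic sequence
`x, f x, …, f^[q-1] x, f^[q] x (= x)`. -/
noncomputable def overCount (f : ℝ → ℝ) (x : ℝ) (q : ℕ) : ℕ :=
  ((Finset.range q).filter fun i =>
    (f (f^[i] x) - f^[i] x) * (f (f^[i + 1] x) - f^[i + 1] x) < 0).card

/-!
The displacements `f y - y` telescope to zero along a periodic orbit and, away from fixed points,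
none of them vanishes; so they cannot all have the same sign, and two consecutive ones have
opposite signs. On the other hand each of the `q` steps contributes at most one sign change.
-/

theorem exists_mul_succ_neg_of_sum_range_eq_zero {R : Type*} [Ring R] [LinearOrder R]
    [IsStrictOrderedRing R] {u : ℕ → R} {n : ℕ} (hn : 0 < n) (hu : ∀ i < n, u i ≠ 0)
    (hsum : ∑ i ∈ Finset.range n, u i = 0) : ∃ i, i + 1 < n ∧ u i * u (i + 1) < 0 := by
  by_contra! hnonneg
  have same_sign : ∀ i < n, 0 < u 0 * u i := by
    intro i hi
    induction i with
    | zero => exact mul_self_pos.mpr (hu 0 hi)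
    | succ k ih =>
      have hk : k < n := k.lt_succ_self.trans hi
      have hstep : 0 < u k * u (k + 1) :=
        (hnonneg k hi).lt_of_ne' (mul_ne_zero (hu k hk) (hu (k + 1) hi))
      grind [mul_pos_iff]
  have hpos : 0 < u 0 * ∑ i ∈ Finset.range n, u i := by
    rw [Finset.mul_sum]
    exact Finset.sum_pos (fun i hi => same_sign i (Finset.mem_range.mp hi))
      (Finset.nonempty_range_iff.mpr hn.ne')
  rw [hsum, mul_zero] at hpos
  exact hpos.false

theorem isFixedPt_iterate_iff_of_mem_periodicPts {α : Type*} {f : α → α} {x : α}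
    (hx : x ∈ periodicPts f) (n : ℕ) : IsFixedPt f (f^[n] x) ↔ IsFixedPt f x := by
  rw [← minimalPeriod_eq_one_iff_isFixedPt, minimalPeriod_apply_iterate hx,
    minimalPeriod_eq_one_iff_isFixedPt]

theorem sum_range_apply_iterate_sub_eq_zero {G : Type*} [AddCommGroup G] {f : G → G} {x : G}
    {n : ℕ} (hx : IsPeriodicPt f n x) :
    ∑ i ∈ Finset.range n, (f (f^[i] x) - f^[i] x) = 0 := by
  simp only [← iterate_succ_apply' f]
  rw [Finset.sum_range_sub (fun i => f^[i] x), hx.eq, iterate_zero_apply, sub_self]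

theorem overCount_pos {f : ℝ → ℝ} {x : ℝ} {q : ℕ} (hq : 0 < q) (hx : IsPeriodicPt f q x)
    (hfx : ¬IsFixedPt f x) : 0 < overCount f x q := by
  have displacement_ne_zero (i : ℕ) : f (f^[i] x) - f^[i] x ≠ 0 :=
    sub_ne_zero.mpr <|
      (isFixedPt_iterate_iff_of_mem_periodicPts (mk_mem_periodicPts hq hx) i).not.mpr hfx
  obtain ⟨i, hi, hneg⟩ := exists_mul_succ_neg_of_sum_range_eq_zero hq
    (fun i _ => displacement_ne_zero i) (sum_range_apply_iterate_sub_eq_zero hx)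
  exact Finset.card_pos.mpr
    ⟨i, Finset.mem_filter.mpr ⟨Finset.mem_range.mpr (i.lt_succ_self.trans hi), hneg⟩⟩

theorem overCount_le (f : ℝ → ℝ) (x : ℝ) (q : ℕ) : overCount f x q ≤ q :=
  (Finset.card_filter_le _ _).trans_eq (Finset.card_range q)

theorem overRotationNumber_mem_general (f : ℝ → ℝ) (x : ℝ) (q : ℕ) (hq : 2 ≤ q)
    (hper : minimalPeriod f x = q) :
    0 < (overCount f x q : ℚ) / (2 * q) ∧ (overCount f x q : ℚ) / (2 * q) ≤ 1 / 2 := by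
  have hq_pos : 0 < q := by lia
  have hperiodic : IsPeriodicPt f q x := hper ▸ isPeriodicPt_minimalPeriod f x
  have hfx : ¬IsFixedPt f x := by
    rw [← minimalPeriod_eq_one_iff_isFixedPt]
    lia
  have hcount_pos : (0 : ℚ) < overCount f x q := by
    exact_mod_cast overCount_pos hq_pos hperiodic hfx
  have hcount_le : (overCount f x q : ℚ) ≤ q := by exact_mod_cast overCount_le f x q
  refine ⟨by positivity, ?_⟩
  rw [div_le_iff₀ (by positivity)]
  linarith

/-- The over-rotation number `p/q = m/(2q)` of a cycle of period `q ≥ 2` of a continuous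
interval map satisfies `0 < p/q ≤ 1/2`. -/
theorem overRotationNumber_mem (a b : ℝ) (hab : a ≤ b) (f : ℝ → ℝ)
    (hf : ContinuousOn f (Set.Icc a b))
    (hmaps : Set.MapsTo f (Set.Icc a b) (Set.Icc a b))
    (x : ℝ) (hx : x ∈ Set.Icc a b) (q : ℕ) (hq : 2 ≤ q)
    (hper : minimalPeriod f x = q) :
    0 < (overCount f x q : ℚ) / (2 * q) ∧ (overCount f x q : ℚ) / (2 * q) ≤ 1 / 2 :=
  overRotationNumber_mem_general f x q hq hper
end

section
/- Every continuous map f : I → I of a closed interval I that has a cycle of period greater than 1 also has a cycle whose over-rotation number equals 1/2. -/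
open Function

/-!
A point of minimal period `2` has over-rotation number `1/2`, so it suffices to find one.
Let `c` be the least point of a nontrivial cycle and `d` its predecessor, `f d = c`. The cycle
starts at `c < d` and reaches `d`, so some point `t < d` of it satisfies `f d ≤ t < d ≤ f t`.
By the intermediate value theorem `f y = t` for some `y ∈ (t, d]`, and then `f y < y ≤ f (f y)`.
On the other hand `f (f e) ≤ e` for the greatest point `e` of the cycle, so `f ∘ f` has a least
fixed point `v` in `[y, e]`. If `v` were fixed by `f`, then `f` would map some `w ∈ [y, v]` to `y`,
and `f (f w) = f y < y ≤ w` would force `f ∘ f` to have a fixed point in `[y, w]`, below `v`.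
-/

open Set

theorem finite_range_iterate_of_mem_periodicPts {α : Type*} {f : α → α} {x : α}
    (hx : x ∈ periodicPts f) : (range fun n => f^[n] x).Finite := by
  refine ((finite_Iio (minimalPeriod f x)).image fun n => f^[n] x).subset ?_
  rintro _ ⟨n, rfl⟩
  exact ⟨n % minimalPeriod f x, Nat.mod_lt _ (minimalPeriod_pos_of_mem_periodicPts hx),
    iterate_mod_minimalPeriod_eq⟩

theorem exists_iterate_succ_le_lt_le_iterate_succ {α : Type*} [LinearOrder α] {f : α → α} {x : α}
    (hx : 1 < minimalPeriod f x) :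
    ∃ m n, f^[n + 1] x ≤ f^[m] x ∧ f^[m] x < f^[n] x ∧ f^[n] x ≤ f^[m + 1] x := by
  have hper : x ∈ periodicPts f := minimalPeriod_pos_iff_mem_periodicPts.1 (by lia)
  obtain ⟨_, ⟨k, rfl⟩, hmin⟩ := exists_min_image (range fun n => f^[n] x) id
    (finite_range_iterate_of_mem_periodicPts hper) ⟨x, 0, rfl⟩
  have hk_le (m : ℕ) : f^[k] x ≤ f^[m] x := hmin _ ⟨m, rfl⟩
  obtain ⟨p, hp⟩ : ∃ p, minimalPeriod f x = p + 1 := ⟨minimalPeriod f x - 1, by lia⟩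
  have hreturn : f^[k + p + 1] x = f^[k] x := by
    rw [add_assoc, ← hp, iterate_add_minimalPeriod_eq]
  have hne : f^[k] x ≠ f^[k + p] x := by
    intro heq
    have hfix : IsFixedPt f (f^[k] x) := by
      rw [IsFixedPt, heq, ← iterate_succ_apply' f, hreturn, heq]
    rw [← minimalPeriod_eq_one_iff_isFixedPt, minimalPeriod_apply_iterate hper] at hfix
    lia
  by_contra! hno
  have hlt (j : ℕ) : f^[k + j] x < f^[k + p] x := by
    induction j with
    | zero => exact (hk_le _).lt_of_ne hne
    | succ j ih => exact hno _ _ (hreturn.trans_le (hk_le _)) ih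
  exact (hlt p).false

section IntermediateValue

variable {α : Type*} [ConditionallyCompleteLinearOrder α] [TopologicalSpace α] [OrderTopology α]
  [DenselyOrdered α]

theorem exists_isLeast_Icc_inter_fixedPoints {f : α → α} {a b : α}
    (hf : ContinuousOn f (Icc a b)) (hab : a ≤ b) (ha : a ≤ f a) (hb : f b ≤ b) :
    ∃ v, IsLeast (Icc a b ∩ fixedPoints f) v := by
  have hclosed : IsClosed (Icc a b ∩ fixedPoints f) :=
    (hf.prodMk continuousOn_id).preimage_isClosed_of_isClosed isClosed_Icc isClosed_diagonal
  exact (isCompact_Icc.of_isClosed_subset hclosed inter_subset_left).exists_isLeast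
    (exists_mem_Icc_isFixedPt hf hab ha hb)

variable {f : α → α} {s : Set α} [s.OrdConnected]

theorem exists_minimalPeriod_eq_two_of_lt_of_le (hf : ContinuousOn f s) (hmaps : MapsTo f s s)
    {y e : α} (hy : y ∈ s) (he : e ∈ s) (hye : y ≤ e) (hfy : f y < y) (hffy : y ≤ f (f y))
    (hffe : f (f e) ≤ e) : ∃ v ∈ s, minimalPeriod f v = 2 := by
  have hsub : Icc y e ⊆ s := s.Icc_subset hy he
  have hf2 : ContinuousOn f^[2] (Icc y e) := (hf.iterate hmaps 2).mono hsub
  obtain ⟨v, ⟨⟨hyv, hve⟩, hv⟩, hleast⟩ :=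
    exists_isLeast_Icc_inter_fixedPoints hf2 hye hffy hffe
  refine ⟨v, hsub ⟨hyv, hve⟩, minimalPeriod_eq_prime hv fun hfix : f v = v => ?_⟩
  obtain ⟨w, ⟨hyw, hwv⟩, hw⟩ : y ∈ f '' Icc y v :=
    intermediate_value_Icc hyv (hf.mono ((Icc_subset_Icc_right hve).trans hsub))
      ⟨hfy.le, hyv.trans_eq hfix.symm⟩
  have hffw : f (f w) ≤ w := by rw [hw]; exact hfy.le.trans hyw
  obtain ⟨u, ⟨hyu, huw⟩, hu⟩ := exists_mem_Icc_isFixedPt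
    (hf2.mono (Icc_subset_Icc_right (hwv.trans hve))) hyw hffy hffw
  have hvw : v ≤ w := (hleast ⟨⟨hyu, huw.trans (hwv.trans hve)⟩, hu⟩).trans huw
  have hvy : v = y := by rw [← hfix, hvw.antisymm hwv, hw]
  exact hfy.ne (hvy ▸ hfix)

theorem exists_minimalPeriod_eq_two_s7 (hf : ContinuousOn f s) (hmaps : MapsTo f s s) {x : α}
    (hx : x ∈ s) (hperiod : 1 < minimalPeriod f x) : ∃ v ∈ s, minimalPeriod f v = 2 := by
  obtain ⟨m, n, hnm, hlt, hmn⟩ := exists_iterate_succ_le_lt_le_iterate_succ hperiod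
  rw [iterate_succ_apply'] at hnm hmn
  have horbit (i : ℕ) : f^[i] x ∈ s := hmaps.iterate i hx
  have hsub : Icc (f^[m] x) (f^[n] x) ⊆ s := s.Icc_subset (horbit m) (horbit n)
  obtain ⟨y, hy, hfy⟩ : f^[m] x ∈ f '' Icc (f^[m] x) (f^[n] x) :=
    intermediate_value_Icc' hlt.le (hf.mono hsub) ⟨hnm, hlt.le.trans hmn⟩
  have hfy_lt : f y < y := by
    refine hfy.trans_lt (hy.1.lt_of_ne fun hmy => ?_)
    exact (hlt.trans_le hmn).ne (by rw [hmy, hfy, hmy])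
  obtain ⟨_, ⟨k, rfl⟩, hmax⟩ := exists_max_image (range fun i => f^[i] x) id
    (finite_range_iterate_of_mem_periodicPts
      (minimalPeriod_pos_iff_mem_periodicPts.1 (zero_lt_one.trans hperiod))) ⟨x, 0, rfl⟩
  refine exists_minimalPeriod_eq_two_of_lt_of_le hf hmaps (hsub hy) (horbit k)
    (hy.2.trans (hmax _ ⟨n, rfl⟩)) hfy_lt (hy.2.trans (by rwa [hfy])) (hmax _ ⟨k + 2, ?_⟩)
  simp only [iterate_succ_apply']

end IntermediateValue

theorem overCount_two_eq_two {f : ℝ → ℝ} {y : ℝ} (hy : minimalPeriod f y = 2) :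
    overCount f y 2 = 2 := by
  have hffy : f (f y) = y := by
    have hreturn := iterate_minimalPeriod (f := f) (x := y)
    rwa [hy] at hreturn
  have hfy : f y - y ≠ 0 := fun h => by
    have := minimalPeriod_eq_one_iff_isFixedPt.2 (sub_eq_zero.1 h)
    lia
  have hneg : (f y - y) * (y - f y) < 0 := by
    rw [← neg_sub (f y), mul_neg, neg_lt_zero]
    exact mul_self_pos.2 hfy
  have hneg' : (y - f y) * (f y - y) < 0 := by rwa [mul_comm]
  rw [overCount, Finset.filter_true_of_mem, Finset.card_range]
  intro i hi
  have hi2 : i < 2 := Finset.mem_range.1 hi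
  interval_cases i
  · simpa [hffy] using hneg
  · simpa [hffy] using hneg'

theorem exists_cycle_overRotationNumber_half_general {s : Set ℝ} [s.OrdConnected] {f : ℝ → ℝ}
    (hf : ContinuousOn f s) (hmaps : MapsTo f s s)
    (hcycle : ∃ x ∈ s, 1 < minimalPeriod f x) :
    ∃ y ∈ s, 2 ≤ minimalPeriod f y ∧
      (overCount f y (minimalPeriod f y) : ℚ) / (2 * (minimalPeriod f y : ℚ)) = 1 / 2 := by
  obtain ⟨x, hx, hperiod⟩ := hcycle
  obtain ⟨y, hy, hy2⟩ := exists_minimalPeriod_eq_two_s7 hf hmaps hx hperiod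
  refine ⟨y, hy, hy2.ge, ?_⟩
  rw [hy2, overCount_two_eq_two hy2]
  norm_num

/-- Every continuous interval map with a cycle of period larger than `1` has a cycle
whose over-rotation number equals `1/2`. -/
theorem exists_cycle_overRotationNumber_half (a b : ℝ) (hab : a ≤ b) (f : ℝ → ℝ)
    (hf : ContinuousOn f (Set.Icc a b))
    (hmaps : Set.MapsTo f (Set.Icc a b) (Set.Icc a b))
    (hcycle : ∃ x ∈ Set.Icc a b, 1 < minimalPeriod f x) :
    ∃ y ∈ Set.Icc a b, 2 ≤ minimalPeriod f y ∧
      (overCount f y (minimalPeriod f y) : ℚ) / (2 * (minimalPeriod f y : ℚ)) = 1 / 2 :=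
  exists_cycle_overRotationNumber_half_general hf hmaps hcycle
end
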